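/- arXiv:0705.2253 — 2 statements merged into one kernel-verified Lean document; each statement's English description precedes it below -/
import Mathlib

section
/- Let (M,d) be a Polish length space of finite diameter, p ≥ 1, and κ ∈ (0,1], and let P be a Markov transition kernel on M such that the map x ↦ P_x from (M,d) to (Pr_{d,p}(M), W_{d,p}) is locally (1−κ)-Lipschitz. Then there exists a unique P-invariant Borel probability measure μ_* on M, and for every ε > 0 and every probability measure μ on M, W_{d,p}(μP^t, μ_*) ≤ ε whenever t ≥ κ^{-1} ln(diam_d(M)/ε); in particular the mixing time τ_{d,p}(ε) = min{t ∈ ℕ : W_{d,p}(μP^t, μ_*) ≤ ε for all probability measures μ} satisfies τ_{d,p}(ε) ≤ ⌈κ^{-1} ln(diam_d(M)/ε)⌉. -/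
open MeasureTheory ENNReal Filter Topology Matrix

noncomputable section

/-- `η` is a coupling of `μ` and `ν`: its two marginals are `μ` and `ν`. -/
def IsCoupling {X : Type*} [MeasurableSpace X] (η : Measure (X × X)) (μ ν : Measure X) : Prop :=
  η.map Prod.fst = μ ∧ η.map Prod.snd = ν

/-- The `L^p` transportation cost (Wasserstein) distance associated with the distance
function `d`, with values in `ℝ≥0∞`:
`W_{d,p}(μ,ν) = inf { (∫ d(x,y)^p dη)^{1/p} : η a coupling of (μ,ν) }`. -/
def wassersteinE {X : Type*} [MeasurableSpace X] (d : X → X → ℝ≥0∞) (p : ℝ)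
    (μ ν : Measure X) : ℝ≥0∞ :=
  ⨅ (η : Measure (X × X)) (_ : IsCoupling η μ ν), (∫⁻ z, d z.1 z.2 ^ p ∂η) ^ (1 / p)

/-- `μ` has a finite `p`-th moment with respect to the distance function `d`. -/
def HasFiniteMoment {X : Type*} [MeasurableSpace X] (d : X → X → ℝ≥0∞) (p : ℝ)
    (μ : Measure X) : Prop :=
  ∃ o : X, ∫⁻ x, d o x ^ p ∂μ < ⊤

/-- The length of the curve `γ` over `[0,1]`, w.r.t. the distance function `d`:
the supremum, over all partitions `0 = t 0 ≤ t 1 ≤ ⋯ ≤ t k = 1` of `[0,1]`, of the sums of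
the distances between consecutive points of the curve. -/
def pathLengthE {X : Type*} (d : X → X → ℝ≥0∞) (γ : ℝ → X) : ℝ≥0∞ :=
  ⨆ (k : ℕ) (t : Fin (k + 1) → ℝ) (_ : Monotone t) (_ : t 0 = 0) (_ : t (Fin.last k) = 1),
    ∑ i : Fin k, d (γ (t i.castSucc)) (γ (t i.succ))

/-- The intrinsic (length) distance on the set `S` induced by the distance function `d`:
the infimum of `d`-lengths of continuous paths joining `a` to `b` inside `S`. -/
def intrinsicDistE {X : Type*} [TopologicalSpace X] (d : X → X → ℝ≥0∞) (S : Set X)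
    (a b : X) : ℝ≥0∞ :=
  ⨅ (γ : ℝ → X) (_ : ContinuousOn γ (Set.Icc 0 1)) (_ : Set.MapsTo γ (Set.Icc 0 1) S)
    (_ : γ 0 = a) (_ : γ 1 = b), pathLengthE d γ

/-- `t` iterated steps of the Markov transition kernel `P`, started from the initial
distribution `μ` (so `kernelIterate P t μ = μP^t`). -/
def kernelIterate {X : Type*} [MeasurableSpace X] (P : X → Measure X) :
    ℕ → Measure X → Measure X
  | 0, μ => μ
  | t + 1, μ => (kernelIterate P t μ).bind P

/-- `(M, dist)` is a length space: the distance between any two points is the infimum of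
the lengths of continuous curves joining them. -/
def IsLengthSpace (M : Type*) [MetricSpace M] : Prop :=
  ∀ x y : M, edist x y =
    ⨅ (γ : ℝ → M) (_ : ContinuousOn γ (Set.Icc 0 1)) (_ : γ 0 = x) (_ : γ 1 = y),
      pathLengthE edist γ

/-- `f : M → N` is locally `C`-Lipschitz with respect to the distance function `dN` on `N`:
for every `x ∈ M`, `limsup_{y → x} dN(f x, f y) / dist(x, y) ≤ C`. -/
def LocallyLipWith {M N : Type*} [MetricSpace M] (dN : N → N → ℝ≥0∞) (C : ℝ)
    (f : M → N) : Prop :=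
  ∀ x : M, Filter.limsup (fun y => dN (f x) (f y) / edist x y) (𝓝[≠] x) ≤ ENNReal.ofReal C

section Coupling

open scoped ProbabilityTheory

variable {M : Type*} [MeasurableSpace M] {μ ν : Measure M}

lemma IsCoupling.isProbabilityMeasure {η : Measure (M × M)} (hη : IsCoupling η μ ν)
    [IsProbabilityMeasure μ] : IsProbabilityMeasure η := by
  have : IsProbabilityMeasure (η.map Prod.fst) := hη.1 ▸ inferInstance
  exact Measure.isProbabilityMeasure_of_map (μ := η) Prod.fst

lemma map_compProd_condKernel_comap {Ω : Type*} [MeasurableSpace Ω]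
    [StandardBorelSpace M] [Nonempty M]
    (ρ : Measure Ω) [IsProbabilityMeasure ρ] {Y : Ω → M} (hY : Measurable Y)
    (θ : Measure (M × M)) [IsProbabilityMeasure θ] (hθ : ρ.map Y = θ.map Prod.fst) :
    (ρ ⊗ₘ (θ.condKernel.comap Y hY)).map (fun z ↦ (Y z.1, z.2)) = θ := by
  refine Measure.ext_of_lintegral _ fun f hf ↦ ?_
  conv_rhs => rw [← θ.disintegrate θ.condKernel, Measure.fst, ← hθ]
  rw [lintegral_map hf (by fun_prop), Measure.lintegral_compProd (by fun_prop),
    Measure.lintegral_compProd hf, lintegral_map (by fun_prop) hY]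
  rfl

end Coupling

section ENNRealNorm

variable {p : ℝ}

lemma eLpNorm'_map_enorm {Ω Ω' : Type*} [MeasurableSpace Ω] [MeasurableSpace Ω']
    {f : Ω' → ℝ≥0∞} (hf : Measurable f) {X : Ω → Ω'} (hX : Measurable X)
    (ρ : Measure Ω) : eLpNorm' f p (ρ.map X) = eLpNorm' (fun ω ↦ f (X ω)) p ρ := by
  simp only [eLpNorm'_eq_lintegral_enorm, enorm_eq_self]
  rw [lintegral_map (by fun_prop) hX]

lemma eLpNorm'_mono_of_le {Ω : Type*} [MeasurableSpace Ω] {ρ : Measure Ω} (hp : 0 ≤ p)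
    {f g : Ω → ℝ≥0∞} (h : ∀ ω, f ω ≤ g ω) : eLpNorm' f p ρ ≤ eLpNorm' g p ρ :=
  eLpNorm'_mono_enorm_ae hp (ae_of_all _ fun ω ↦ by simpa using h ω)

lemma eLpNorm'_le_of_forall_le {Ω : Type*} [MeasurableSpace Ω] {ρ : Measure Ω}
    [IsProbabilityMeasure ρ] (hp : 0 < p) {f : Ω → ℝ≥0∞} {c : ℝ≥0∞} (h : ∀ ω, f ω ≤ c) :
    eLpNorm' f p ρ ≤ c :=
  (eLpNorm'_mono_of_le hp.le h).trans_eq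
    ((eLpNorm'_const_of_isProbabilityMeasure c hp).trans (enorm_eq_self c))

lemma eLpNorm'_add_le_ennreal {Ω : Type*} [MeasurableSpace Ω] {ρ : Measure Ω} (hp : 1 ≤ p)
    {f g : Ω → ℝ≥0∞} (hf : Measurable f) (hg : Measurable g) :
    eLpNorm' (fun ω ↦ f ω + g ω) p ρ ≤ eLpNorm' f p ρ + eLpNorm' g p ρ := by
  simpa only [eLpNorm'_eq_lintegral_enorm, enorm_eq_self, Pi.add_apply] using
    ENNReal.lintegral_Lp_add_le hf.aemeasurable hg.aemeasurable hp

lemma eLpNorm'_const_mul_ennreal {Ω : Type*} [MeasurableSpace Ω] {ρ : Measure Ω} (hp : 0 < p)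
    {f : Ω → ℝ≥0∞} (hf : Measurable f) (c : ℝ≥0∞) :
    eLpNorm' (fun ω ↦ c * f ω) p ρ = c * eLpNorm' f p ρ := by
  simp only [eLpNorm'_eq_lintegral_enorm, enorm_eq_self, ENNReal.mul_rpow_of_nonneg _ _ hp.le]
  rw [lintegral_const_mul _ (by fun_prop), ENNReal.mul_rpow_of_nonneg _ _ (by positivity),
    ← ENNReal.rpow_mul, mul_one_div_cancel hp.ne', ENNReal.rpow_one]

lemma lintegral_le_eLpNorm' {Ω : Type*} [MeasurableSpace Ω] {ρ : Measure Ω}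
    [IsProbabilityMeasure ρ] (hp : 1 ≤ p) {f : Ω → ℝ≥0∞} (hf : Measurable f) :
    ∫⁻ ω, f ω ∂ρ ≤ eLpNorm' f p ρ := by
  have := eLpNorm'_le_eLpNorm'_of_exponent_le one_pos hp ρ hf.aestronglyMeasurable
  simpa [eLpNorm'_eq_lintegral_enorm] using this

end ENNRealNorm

section Wasserstein

open scoped ProbabilityTheory

variable {M : Type*} [MetricSpace M] [MeasurableSpace M] {p : ℝ} {μ ν ρ : Measure M}

lemma wassersteinE_eq_iInf_eLpNorm' (p : ℝ) (μ ν : Measure M) :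
    wassersteinE edist p μ ν =
      ⨅ (η : Measure (M × M)) (_ : IsCoupling η μ ν),
        eLpNorm' (fun z : M × M ↦ edist z.1 z.2) p η := by
  simp only [wassersteinE, eLpNorm'_eq_lintegral_enorm, enorm_eq_self]

lemma IsCoupling.wassersteinE_le {η : Measure (M × M)} (hη : IsCoupling η μ ν) :
    wassersteinE edist p μ ν ≤ eLpNorm' (fun z : M × M ↦ edist z.1 z.2) p η := by
  rw [wassersteinE_eq_iInf_eLpNorm']
  exact iInf₂_le η hη

lemma exists_isCoupling_eLpNorm'_lt {a : ℝ≥0∞} (h : wassersteinE edist p μ ν < a) :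
    ∃ η : Measure (M × M), IsCoupling η μ ν ∧
      eLpNorm' (fun z : M × M ↦ edist z.1 z.2) p η < a := by
  rw [wassersteinE_eq_iInf_eLpNorm'] at h
  simpa only [iInf_lt_iff, exists_prop] using h

lemma wassersteinE_le_ediam (hp : 0 < p) [IsProbabilityMeasure μ] [IsProbabilityMeasure ν] :
    wassersteinE edist p μ ν ≤ Metric.ediam (Set.univ : Set M) := by
  have hη : IsCoupling (μ.prod ν) μ ν := ⟨by simp, by simp⟩
  exact hη.wassersteinE_le.trans
    (eLpNorm'_le_of_forall_le hp fun z ↦ Metric.edist_le_ediam_of_mem trivial trivial)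

variable [TopologicalSpace.SeparableSpace M] [BorelSpace M]

lemma wassersteinE_map_le {Ω : Type*} [MeasurableSpace Ω] (ρ : Measure Ω)
    {X Y : Ω → M} (hX : Measurable X) (hY : Measurable Y) :
    wassersteinE edist p (ρ.map X) (ρ.map Y) ≤ eLpNorm' (fun ω ↦ edist (X ω) (Y ω)) p ρ := by
  have : SecondCountableTopology M := UniformSpace.secondCountable_of_separable M
  have hη : IsCoupling (ρ.map fun ω ↦ (X ω, Y ω)) (ρ.map X) (ρ.map Y) :=
    ⟨by rw [Measure.map_map (by fun_prop) (by fun_prop)]; rfl,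
      by rw [Measure.map_map (by fun_prop) (by fun_prop)]; rfl⟩
  refine hη.wassersteinE_le.trans_eq ?_
  rw [eLpNorm'_map_enorm (by fun_prop) (by fun_prop)]

lemma wassersteinE_self (hp : 0 < p) (μ : Measure M) : wassersteinE edist p μ μ = 0 := by
  have h := wassersteinE_map_le (p := p) μ measurable_id measurable_id (M := M)
  simpa [Measure.map_id, eLpNorm'_eq_lintegral_enorm, hp, hp.le] using h

lemma wassersteinE_le_symm (p : ℝ) (μ ν : Measure M) :
    wassersteinE edist p μ ν ≤ wassersteinE edist p ν μ := by
  conv_rhs => rw [wassersteinE_eq_iInf_eLpNorm']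
  refine le_iInf₂ fun η hη ↦ ?_
  rw [← hη.1, ← hη.2]
  simpa only [edist_comm] using wassersteinE_map_le (p := p) η measurable_snd measurable_fst (M := M)

lemma wassersteinE_comm (p : ℝ) (μ ν : Measure M) :
    wassersteinE edist p μ ν = wassersteinE edist p ν μ :=
  (wassersteinE_le_symm p μ ν).antisymm (wassersteinE_le_symm p ν μ)

variable [CompleteSpace M] [Nonempty M]

lemma wassersteinE_triangle (hp : 1 ≤ p) (μ ν ρ : Measure M)
    [IsProbabilityMeasure μ] [IsProbabilityMeasure ν] :
    wassersteinE edist p μ ρ ≤ wassersteinE edist p μ ν + wassersteinE edist p ν ρ := by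
  have : SecondCountableTopology M := UniformSpace.secondCountable_of_separable M
  have : PolishSpace M := {}
  conv_rhs => rw [wassersteinE_eq_iInf_eLpNorm', wassersteinE_eq_iInf_eLpNorm']
  simp only [ENNReal.iInf_add, ENNReal.add_iInf]
  refine le_iInf₂ fun θ hθ ↦ le_iInf₂ fun η hη ↦ ?_
  have := hη.isProbabilityMeasure
  have := hθ.isProbabilityMeasure
  let ζ : Measure ((M × M) × M) := η ⊗ₘ (θ.condKernel.comap Prod.snd measurable_snd)
  have h₁ : ζ.map Prod.fst = η := Measure.fst_compProd η _
  have h₂ : ζ.map (fun z ↦ (z.1.2, z.2)) = θ :=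
    map_compProd_condKernel_comap η measurable_snd θ (hη.2.trans hθ.1.symm)
  have hμ : ζ.map (fun z ↦ z.1.1) = μ := by
    rw [← hη.1, ← h₁, Measure.map_map (by fun_prop) (by fun_prop)]; rfl
  have hρ : ζ.map (fun z ↦ z.2) = ρ := by
    rw [← hθ.2, ← h₂, Measure.map_map (by fun_prop) (by fun_prop)]; rfl
  calc wassersteinE edist p μ ρ
      ≤ eLpNorm' (fun z : (M × M) × M ↦ edist z.1.1 z.2) p ζ := by
        conv_lhs => rw [← hμ, ← hρ]
        exact wassersteinE_map_le ζ (by fun_prop) (by fun_prop)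
    _ ≤ eLpNorm' (fun z : (M × M) × M ↦ edist z.1.1 z.1.2 + edist z.1.2 z.2) p ζ :=
        eLpNorm'_mono_of_le (by positivity) fun z ↦ edist_triangle _ _ _
    _ ≤ eLpNorm' (fun z : (M × M) × M ↦ edist z.1.1 z.1.2) p ζ
          + eLpNorm' (fun z : (M × M) × M ↦ edist z.1.2 z.2) p ζ :=
        eLpNorm'_add_le_ennreal hp (by fun_prop) (by fun_prop)
    _ = _ := by
        conv_rhs => rw [← h₁, ← h₂]
        rw [eLpNorm'_map_enorm (by fun_prop) (by fun_prop),
          eLpNorm'_map_enorm (by fun_prop) (by fun_prop)]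

/-- Couplings of the consecutive terms of a sequence of probability measures are the laws of the
consecutive pairs of a single process. -/
lemma exists_process_of_isCoupling {m : ℕ → Measure M} [∀ n, IsProbabilityMeasure (m n)]
    {η : ℕ → Measure (M × M)} (hη : ∀ n, IsCoupling (η n) (m n) (m (n + 1))) :
    ∃ ρ : Measure (ℕ → M), IsProbabilityMeasure ρ ∧
      ∀ n, ρ.map (fun x ↦ (x n, x (n + 1))) = η n := by
  have : SecondCountableTopology M := UniformSpace.secondCountable_of_separable M
  have : PolishSpace M := {}
  have := fun n ↦ (hη n).isProbabilityMeasure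
  let κ (n : ℕ) : ProbabilityTheory.Kernel (Π _ : Finset.Iic n, M) M :=
    (η n).condKernel.comap (fun x ↦ x ⟨n, by simp⟩) (measurable_pi_apply _)
  have hκ : ∀ n, ProbabilityTheory.IsMarkovKernel (κ n) := fun n ↦ by
    dsimp only [κ]; infer_instance
  let ρ : Measure (ℕ → M) := ProbabilityTheory.Kernel.trajMeasure (X := fun _ ↦ M) (m 0) κ
  have hstep (n : ℕ) (hn : ρ.map (fun x ↦ x n) = m n) :
      ρ.map (fun x ↦ (x n, x (n + 1))) = η n := by
    have hY : Measurable fun x : (Π _ : Finset.Iic n, M) ↦ x ⟨n, by simp⟩ :=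
      measurable_pi_apply _
    have hr : Measurable (Preorder.frestrictLe (π := fun _ ↦ M) n) := by fun_prop
    have := Measure.isProbabilityMeasure_map (μ := ρ) hr.aemeasurable
    have h := map_compProd_condKernel_comap (ρ.map (Preorder.frestrictLe n)) hY (η n) (by
      rw [Measure.map_map hY hr, (hη n).1, ← hn]; rfl)
    have h' : ρ.map (Preorder.frestrictLe n) ⊗ₘ κ n =
      ρ.map (fun x ↦ (Preorder.frestrictLe n x, x (n + 1))) :=
        ProbabilityTheory.Kernel.map_frestrictLe_trajMeasure_compProd_eq_map_trajMeasure
    rw [← h]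
    change _ = Measure.map _ (ρ.map (Preorder.frestrictLe n) ⊗ₘ κ n)
    rw [h', Measure.map_map (by fun_prop) (by fun_prop)]
    rfl
  have hmarg (n : ℕ) : ρ.map (fun x ↦ x n) = m n := by
    induction n with
    | zero =>
      have h₀ : ρ.map (Preorder.frestrictLe 0) =
          (m 0).map (MeasurableEquiv.piUnique (fun _ : Finset.Iic 0 ↦ M)).symm := by
        simp only [ρ, ProbabilityTheory.Kernel.trajMeasure]
        rw [Measure.map_comp _ _ (by fun_prop), ProbabilityTheory.Kernel.traj_map_frestrictLe,
          ProbabilityTheory.Kernel.partialTraj_self, Measure.id_comp]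
      have hY : Measurable fun x : (Π _ : Finset.Iic 0, M) ↦ x ⟨0, by simp⟩ :=
        measurable_pi_apply _
      have h := congrArg (Measure.map fun x : (Π _ : Finset.Iic 0, M) ↦ x ⟨0, by simp⟩) h₀
      rw [Measure.map_map hY (by fun_prop), Measure.map_map hY (by fun_prop)] at h
      exact h.trans Measure.map_id
    | succ n ih =>
      rw [← (hη n).2, ← hstep n ih, Measure.map_map (by fun_prop) (by fun_prop)]
      rfl
  exact ⟨ρ, inferInstance, fun n ↦ hstep n (hmarg n)⟩

end Wasserstein

section Convergence

variable {M : Type*} [MetricSpace M] [MeasurableSpace M] [BorelSpace M]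
  {p : ℝ}

lemma eLpNorm'_tsum_le {Ω : Type*} [MeasurableSpace Ω] {ρ : Measure Ω} (hp : 1 ≤ p)
    {f : ℕ → Ω → ℝ≥0∞} (hf : ∀ n, Measurable (f n)) :
    eLpNorm' (fun ω ↦ ∑' n, f n ω) p ρ ≤ ∑' n, eLpNorm' (f n) p ρ := by
  have hp₀ : 0 < p := one_pos.trans_le hp
  have hpow (ω : Ω) : (∑' n, f n ω) ^ p = ⨆ N, (∑ n ∈ Finset.range N, f n ω) ^ p := by
    rw [ENNReal.tsum_eq_iSup_nat]
    exact (ENNReal.orderIsoRpow p hp₀).map_iSup _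
  have hmeas (N : ℕ) : Measurable fun ω ↦ (∑ n ∈ Finset.range N, f n ω) ^ p := by fun_prop
  have hmono : Monotone fun (N : ℕ) (ω : Ω) ↦ (∑ n ∈ Finset.range N, f n ω) ^ p := by
    intro N N' h ω
    dsimp only
    gcongr
  rw [eLpNorm'_eq_lintegral_enorm]
  simp only [enorm_eq_self]
  rw [one_div, ENNReal.rpow_inv_le_iff hp₀]
  simp only [hpow]
  rw [lintegral_iSup hmeas hmono]
  refine iSup_le fun N ↦ ?_
  rw [← ENNReal.rpow_inv_le_iff hp₀, ← one_div]
  calc (∫⁻ ω, (∑ n ∈ Finset.range N, f n ω) ^ p ∂ρ) ^ (1 / p)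
      = eLpNorm' (∑ n ∈ Finset.range N, f n) p ρ := by
        simp only [eLpNorm'_eq_lintegral_enorm, enorm_eq_self, Finset.sum_apply]
    _ ≤ ∑ n ∈ Finset.range N, eLpNorm' (f n) p ρ :=
        eLpNorm'_sum_le (fun n _ ↦ (hf n).aestronglyMeasurable) hp
    _ ≤ ∑' n, eLpNorm' (f n) p ρ := ENNReal.sum_le_tsum _

/-- The Wasserstein space over a Polish space is complete. -/
lemma exists_tendsto_wassersteinE [CompleteSpace M] [TopologicalSpace.SeparableSpace M]
    [Nonempty M] (hp : 1 ≤ p) {m : ℕ → Measure M} [∀ n, IsProbabilityMeasure (m n)]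
    {a : ℕ → ℝ≥0∞} (ha : ∑' n, a n ≠ ⊤)
    (hm : ∀ n, wassersteinE edist p (m n) (m (n + 1)) < a n) :
    ∃ μ : Measure M, IsProbabilityMeasure μ ∧
      Tendsto (fun n ↦ wassersteinE edist p (m n) μ) atTop (𝓝 0) := by
  have : SecondCountableTopology M := UniformSpace.secondCountable_of_separable M
  choose η hη hηa using fun n ↦ exists_isCoupling_eLpNorm'_lt (hm n)
  obtain ⟨ρ, hρ, hmap⟩ := exists_process_of_isCoupling hη
  have hcost (n : ℕ) : eLpNorm' (fun x : ℕ → M ↦ edist (x n) (x (n + 1))) p ρ ≤ a n := by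
    refine le_trans (le_of_eq ?_) (hηa n).le
    rw [← hmap n, eLpNorm'_map_enorm (by fun_prop) (by fun_prop)]
  have hfin : ∀ᵐ x : ℕ → M ∂ρ, ∑' n, edist (x n) (x (n + 1)) < ⊤ := by
    refine ae_lt_top (by fun_prop) (ne_top_of_le_ne_top ha ?_)
    rw [lintegral_tsum (by fun_prop)]
    exact ENNReal.tsum_le_tsum fun n ↦
      (lintegral_le_eLpNorm' hp (by fun_prop)).trans (hcost n)
  obtain ⟨Z, hZ, hlim⟩ := measurable_limit_of_tendsto_metrizable_ae (μ := ρ)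
    (f := fun (n : ℕ) (x : ℕ → M) ↦ x n) (L := atTop)
    (fun n ↦ (measurable_pi_apply n).aemeasurable)
    (hfin.mono fun x hx ↦ cauchySeq_tendsto_of_complete
      (cauchySeq_of_edist_le_of_tsum_ne_top _ (fun n ↦ le_rfl) hx.ne))
  have hmarg (n : ℕ) : ρ.map (fun x ↦ x n) = m n := by
    rw [← (hη n).1, ← hmap n, Measure.map_map (by fun_prop) (by fun_prop)]
    rfl
  refine ⟨ρ.map Z, Measure.isProbabilityMeasure_map hZ.aemeasurable, ?_⟩
  refine tendsto_of_tendsto_of_tendsto_of_le_of_le tendsto_const_nhds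
    (ENNReal.tendsto_sum_nat_add a ha) (fun _ ↦ zero_le) fun n ↦ ?_
  calc wassersteinE edist p (m n) (ρ.map Z)
      ≤ eLpNorm' (fun x : ℕ → M ↦ edist (x n) (Z x)) p ρ := by
        rw [← hmarg n]
        exact wassersteinE_map_le ρ (by fun_prop) hZ
    _ ≤ eLpNorm' (fun x : ℕ → M ↦ ∑' k, edist (x (n + k)) (x (n + k + 1))) p ρ := by
        refine eLpNorm'_mono_enorm_ae (by positivity) (hlim.mono fun x hx ↦ ?_)
        simp only [enorm_eq_self]
        exact edist_le_tsum_of_edist_le_of_tendsto _ (fun k ↦ le_rfl) hx n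
    _ ≤ ∑' k, eLpNorm' (fun x : ℕ → M ↦ edist (x (n + k)) (x (n + k + 1))) p ρ :=
        eLpNorm'_tsum_le hp (by fun_prop)
    _ ≤ ∑' k, a (k + n) := ENNReal.tsum_le_tsum fun k ↦ add_comm n k ▸ hcost (n + k)

lemma integrable_of_lipschitzWith_of_bounded {f : M → ℝ} {K : NNReal} (hf : LipschitzWith K f)
    (hb : ∃ C : ℝ, ∀ x y, dist (f x) (f y) ≤ C) (μ : Measure M) [IsProbabilityMeasure μ] :
    Integrable f μ := by
  obtain ⟨C, hC⟩ := hb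
  have : Nonempty M := nonempty_of_isProbabilityMeasure μ
  obtain ⟨o⟩ := this
  refine Integrable.of_bound (C := C + ‖f o‖) hf.continuous.measurable.aestronglyMeasurable
    (ae_of_all _ fun x ↦ ?_)
  have h₁ := hC x o
  have h₂ := norm_sub_norm_le (f x) (f o)
  rw [dist_eq_norm] at h₁
  linarith

lemma edist_integral_le_mul_wassersteinE (hp : 1 ≤ p) {f : M → ℝ} {K : NNReal} (hK : K ≠ 0)
    [TopologicalSpace.SeparableSpace M]
    (hf : LipschitzWith K f) (hb : ∃ C : ℝ, ∀ x y, dist (f x) (f y) ≤ C)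
    (μ ν : Measure M) [IsProbabilityMeasure μ] [IsProbabilityMeasure ν] :
    edist (∫ x, f x ∂μ) (∫ x, f x ∂ν) ≤ K * wassersteinE edist p μ ν := by
  have : SecondCountableTopology M := UniformSpace.secondCountable_of_separable M
  have hfm : Measurable f := hf.continuous.measurable
  rw [wassersteinE_eq_iInf_eLpNorm']
  simp only [ENNReal.mul_iInf_of_ne (ENNReal.coe_ne_zero.2 hK) ENNReal.coe_ne_top]
  refine le_iInf₂ fun η hη ↦ ?_
  have := hη.isProbabilityMeasure
  have hiμ := integrable_of_lipschitzWith_of_bounded hf hb μ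
  have hiν := integrable_of_lipschitzWith_of_bounded hf hb ν
  have h₁ : ∫ x, f x ∂μ = ∫ z, f z.1 ∂η := by
    rw [← hη.1, integral_map (by fun_prop) (by fun_prop)]
  have h₂ : ∫ x, f x ∂ν = ∫ z, f z.2 ∂η := by
    rw [← hη.2, integral_map (by fun_prop) (by fun_prop)]
  have hi₁ : Integrable (fun z : M × M ↦ f z.1) η :=
    Integrable.comp_measurable (hη.1.symm ▸ hiμ) measurable_fst
  have hi₂ : Integrable (fun z : M × M ↦ f z.2) η :=
    Integrable.comp_measurable (hη.2.symm ▸ hiν) measurable_snd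
  rw [h₁, h₂, edist_eq_enorm_sub, ← integral_sub hi₁ hi₂]
  calc ‖∫ z, (f z.1 - f z.2) ∂η‖ₑ ≤ ∫⁻ z, ‖f z.1 - f z.2‖ₑ ∂η := enorm_integral_le_lintegral_enorm _
    _ ≤ ∫⁻ z : M × M, K * edist z.1 z.2 ∂η :=
        lintegral_mono fun z ↦ by rw [← edist_eq_enorm_sub]; exact hf z.1 z.2
    _ = K * ∫⁻ z : M × M, edist z.1 z.2 ∂η := lintegral_const_mul _ (by fun_prop)
    _ ≤ _ := by gcongr; exact lintegral_le_eLpNorm' hp (by fun_prop)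

/-- A Wasserstein limit agrees with a weak limit. -/
lemma eq_of_tendsto_wassersteinE [TopologicalSpace.SeparableSpace M] (hp : 1 ≤ p)
    {m : ℕ → Measure M} [∀ n, IsProbabilityMeasure (m n)] {μ ν : Measure M}
    [IsProbabilityMeasure μ] [IsProbabilityMeasure ν]
    (hμ : Tendsto (fun n ↦ wassersteinE edist p (m n) μ) atTop (𝓝 0))
    (hν : ∀ f : M → ℝ, (∃ C : ℝ, ∀ x y, dist (f x) (f y) ≤ C) → (∃ K, LipschitzWith K f) →
      Tendsto (fun n ↦ ∫ x, f x ∂(m n)) atTop (𝓝 (∫ x, f x ∂ν))) : μ = ν := by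
  let m' (n : ℕ) : ProbabilityMeasure M := ⟨m n, inferInstance⟩
  let μ' : ProbabilityMeasure M := ⟨μ, inferInstance⟩
  let ν' : ProbabilityMeasure M := ⟨ν, inferInstance⟩
  have h₁ : Tendsto m' atTop (𝓝 μ') := by
    refine tendsto_iff_forall_lipschitz_integral_tendsto.2 fun f hb ⟨K, hK⟩ ↦ ?_
    rw [tendsto_iff_edist_tendsto_0]
    have hlim : Tendsto (fun n ↦ ((K + 1 : NNReal) : ℝ≥0∞) * wassersteinE edist p (m n) μ)
        atTop (𝓝 0) := by
      simpa using ENNReal.Tendsto.const_mul hμ (Or.inr (ENNReal.coe_ne_top (r := K + 1)))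
    exact tendsto_of_tendsto_of_tendsto_of_le_of_le tendsto_const_nhds hlim (fun _ ↦ zero_le)
      fun n ↦ edist_integral_le_mul_wassersteinE hp (by positivity)
        (hK.weaken le_self_add) hb (m n) μ
  have h₂ : Tendsto m' atTop (𝓝 ν') :=
    tendsto_iff_forall_lipschitz_integral_tendsto.2 hν
  exact congrArg (fun μ : ProbabilityMeasure M ↦ (μ : Measure M)) (tendsto_nhds_unique h₁ h₂)

lemma eq_of_wassersteinE_eq_zero [TopologicalSpace.SeparableSpace M] (hp : 1 ≤ p)
    {μ ν : Measure M} [IsProbabilityMeasure μ] [IsProbabilityMeasure ν]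
    (h : wassersteinE edist p μ ν = 0) : μ = ν :=
  (eq_of_tendsto_wassersteinE hp (m := fun _ ↦ μ) (by simp [h])
    fun _ _ _ ↦ tendsto_const_nhds).symm

end Convergence

section Contraction

variable {M : Type*} [MetricSpace M]

/-- Along a continuous curve, a pseudodistance that is locally at most `c` times the distance is
at most `c` times the length of the curve. -/
lemma le_mul_pathLengthE_of_eventually_le {D : M → M → ℝ≥0∞} {c : ℝ≥0∞}
    (hself : ∀ x, D x x = 0) (hcomm : ∀ x y, D x y = D y x)
    (htri : ∀ x y z, D x z ≤ D x y + D y z)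
    (hloc : ∀ x, ∀ᶠ y in 𝓝 x, D x y ≤ c * edist x y)
    {γ : ℝ → M} (hγ : ContinuousOn γ (Set.Icc 0 1)) :
    D (γ 0) (γ 1) ≤ c * pathLengthE edist γ := by
  let Q (t : ℝ) : Prop := ∃ (n : ℕ) (u : ℕ → ℝ), Monotone u ∧ u 0 = 0 ∧ u n = t ∧
    D (γ 0) (γ t) ≤ c * ∑ i ∈ Finset.range n, edist (γ (u i)) (γ (u (i + 1)))
  have hstep {s t : ℝ} (hst : s ≤ t) (h : D (γ s) (γ t) ≤ c * edist (γ s) (γ t)) (hs : Q s) :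
      Q t := by
    obtain ⟨n, u, hu, hu0, hun, hD⟩ := hs
    refine ⟨n + 1, fun i ↦ if i ≤ n then u i else t, ?_, by simpa using hu0, by simp, ?_⟩
    · intro i j hij
      dsimp only
      split_ifs with hi hj hj
      · exact hu hij
      · exact (hu hi).trans (hun.trans_le hst)
      · omega
      · exact le_rfl
    · rw [Finset.sum_range_succ, mul_add]
      refine (htri _ (γ s) _).trans (add_le_add (hD.trans_eq ?_) (h.trans_eq ?_))
      · congr 1
        refine Finset.sum_congr rfl fun i hi ↦ ?_
        have hi := Finset.mem_range.1 hi
        dsimp only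
        rw [if_pos hi.le, if_pos (by omega)]
      · simp [hun]
  have hnear (t : ℝ) (ht : t ∈ Set.Icc (0 : ℝ) 1) :
      ∃ δ > 0, ∀ s ∈ Set.Icc (0 : ℝ) 1, |s - t| < δ →
        D (γ t) (γ s) ≤ c * edist (γ t) (γ s) := by
    obtain ⟨δ, hδ, h⟩ := Metric.mem_nhdsWithin_iff.1 ((hγ t ht).eventually (hloc (γ t)))
    exact ⟨δ, hδ, fun s hs hst ↦ h ⟨by simpa [Real.dist_eq] using hst, hs⟩⟩
  let S : Set ℝ := {t | t ∈ Set.Icc (0 : ℝ) 1 ∧ Q t}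
  have hS0 : (0 : ℝ) ∈ S := ⟨by simp, 0, fun _ ↦ 0, monotone_const, rfl, rfl, by simp [hself]⟩
  have hSb : BddAbove S := ⟨1, fun t ht ↦ ht.1.2⟩
  have hb : sSup S ∈ Set.Icc (0 : ℝ) 1 :=
    ⟨le_csSup hSb hS0, csSup_le ⟨0, hS0⟩ fun t ht ↦ ht.1.2⟩
  obtain ⟨δ, hδ, hnb⟩ := hnear _ hb
  have hQb : Q (sSup S) := by
    obtain ⟨s, hs, hsb⟩ := exists_lt_of_lt_csSup ⟨0, hS0⟩ (sub_lt_self (sSup S) hδ)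
    have hle := le_csSup hSb hs
    refine hstep hle ?_ hs.2
    rw [hcomm, edist_comm]
    exact hnb s hs.1 (by rw [abs_lt]; constructor <;> linarith)
  have hb1 : sSup S = 1 := by
    by_contra hne
    have hlt : sSup S < 1 := lt_of_le_of_ne hb.2 hne
    have hpos : 0 < min (δ / 2) (1 - sSup S) := lt_min (by positivity) (by linarith)
    have hle₁ := min_le_left (δ / 2) (1 - sSup S)
    have hle₂ := min_le_right (δ / 2) (1 - sSup S)
    have hmem : sSup S + min (δ / 2) (1 - sSup S) ∈ Set.Icc (0 : ℝ) 1 :=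
      ⟨by linarith [hb.1], by linarith⟩
    have hQ := hstep (by linarith) (hnb _ hmem (by
      rw [add_sub_cancel_left, abs_of_pos hpos]; linarith)) hQb
    linarith [le_csSup hSb (show _ ∈ S from ⟨hmem, hQ⟩)]
  obtain ⟨n, u, hu, hu0, hun, hD⟩ := hb1 ▸ hQb
  refine hD.trans ?_
  gcongr
  rw [← Fin.sum_univ_eq_sum_range (fun i ↦ edist (γ (u i)) (γ (u (i + 1))))]
  refine le_iSup_of_le n (le_iSup_of_le (fun i : Fin (n + 1) ↦ u i) (le_iSup_of_le ?_
    (le_iSup_of_le ?_ (le_iSup_of_le ?_ ?_))))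
  · exact fun i j hij ↦ hu hij
  · simpa using hu0
  · simpa using hun
  · simp

variable [MeasurableSpace M] [BorelSpace M] [TopologicalSpace.SeparableSpace M] {p : ℝ}
  {P : M → Measure M}

/-- Averaging near-optimal couplings over a countable index set. -/
lemma wassersteinE_bind_map_le_of_countable (hp : 1 ≤ p) {C : NNReal} (hPmeas : Measurable P)
    (hP : ∀ x y, wassersteinE edist p (P x) (P y) ≤ C * edist x y)
    {ι : Type*} [Countable ι] [MeasurableSpace ι] [MeasurableSingletonClass ι]
    (ρ : Measure ι) [IsProbabilityMeasure ρ] (x y : ι → M) :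
    wassersteinE edist p ((ρ.map x).bind P) ((ρ.map y).bind P) ≤
      C * eLpNorm' (fun i ↦ edist (x i) (y i)) p ρ := by
  have : SecondCountableTopology M := UniformSpace.secondCountable_of_separable M
  have hp₀ : 0 < p := one_pos.trans_le hp
  refine ENNReal.le_of_forall_pos_le_add fun ε hε _ ↦ ?_
  have hlt (i : ι) :
      wassersteinE edist p (P (x i)) (P (y i)) < C * edist (x i) (y i) + ε :=
    (hP _ _).trans_lt (ENNReal.lt_add_right
      (ENNReal.mul_ne_top ENNReal.coe_ne_top (edist_ne_top _ _)) (by simpa using hε.ne'))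
  choose θ hθ hθlt using fun i ↦ exists_isCoupling_eLpNorm'_lt (hlt i)
  have hθm : Measurable θ := measurable_of_countable θ
  have hx : Measurable x := measurable_of_countable x
  have hy : Measurable y := measurable_of_countable y
  have hmarg {z : ι → M} (hz : Measurable z) {g : M × M → M} (hg : Measurable g)
      (h : ∀ i, (θ i).map g = P (z i)) : (ρ.bind θ).map g = (ρ.map z).bind P := by
    refine Measure.ext fun s hs ↦ ?_
    rw [Measure.map_apply hg hs, Measure.bind_apply (hg hs) hθm.aemeasurable,
      Measure.bind_apply hs hPmeas.aemeasurable,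
      lintegral_map (f := fun a ↦ P a s) (Measure.measurable_coe hs |>.comp hPmeas) hz]
    refine lintegral_congr fun i ↦ ?_
    rw [← h i, Measure.map_apply hg hs]
  have hcoup : IsCoupling (ρ.bind θ) ((ρ.map x).bind P) ((ρ.map y).bind P) :=
    ⟨hmarg hx measurable_fst fun i ↦ (hθ i).1, hmarg hy measurable_snd fun i ↦ (hθ i).2⟩
  have hmeas {f : ι → ℝ≥0∞} : Measurable f := measurable_of_countable f
  calc wassersteinE edist p ((ρ.map x).bind P) ((ρ.map y).bind P)
      ≤ eLpNorm' (fun z : M × M ↦ edist z.1 z.2) p (ρ.bind θ) := hcoup.wassersteinE_le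
    _ = eLpNorm' (fun i ↦ eLpNorm' (fun z : M × M ↦ edist z.1 z.2) p (θ i)) p ρ := by
        simp only [eLpNorm'_eq_lintegral_enorm, enorm_eq_self]
        rw [Measure.lintegral_bind hθm.aemeasurable (by fun_prop)]
        simp only [← ENNReal.rpow_mul, one_div_mul_cancel hp₀.ne', ENNReal.rpow_one]
    _ ≤ eLpNorm' (fun i ↦ C * edist (x i) (y i) + ε) p ρ :=
        eLpNorm'_mono_of_le hp₀.le fun i ↦ (hθlt i).le
    _ ≤ eLpNorm' (fun i ↦ C * edist (x i) (y i)) p ρ + eLpNorm' (fun _ ↦ (ε : ℝ≥0∞)) p ρ :=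
        eLpNorm'_add_le_ennreal hp hmeas hmeas
    _ ≤ C * eLpNorm' (fun i ↦ edist (x i) (y i)) p ρ + ε :=
        add_le_add (eLpNorm'_const_mul_ennreal hp₀ hmeas _).le
          (eLpNorm'_le_of_forall_le hp₀ fun _ ↦ le_rfl)

variable [CompleteSpace M] [Nonempty M]

lemma IsLengthSpace.wassersteinE_le_mul_edist (hlen : IsLengthSpace M) (hp : 1 ≤ p) {C : ℝ}
    (hPprob : ∀ x, IsProbabilityMeasure (P x))
    (hPlip : LocallyLipWith (wassersteinE edist p) C P) (x y : M) :
    wassersteinE edist p (P x) (P y) ≤ ENNReal.ofReal C * edist x y := by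
  have hp₀ : 0 < p := one_pos.trans_le hp
  rcases eq_or_ne x y with rfl | hxy
  · simp [wassersteinE_self hp₀]
  rw [← ENNReal.div_le_iff (edist_pos.2 hxy).ne' (edist_ne_top _ _)]
  refine le_of_forall_gt_imp_ge_of_dense fun c hc ↦ ?_
  rcases eq_or_ne c ⊤ with rfl | hctop
  · exact le_top
  have hc₀ : c ≠ 0 := (pos_of_gt hc).ne'
  have hloc (z : M) : ∀ᶠ w in 𝓝 z, wassersteinE edist p (P z) (P w) ≤ c * edist z w := by
    have h := eventually_lt_of_limsup_lt ((hPlip z).trans_lt hc)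
    rw [eventually_nhdsWithin_iff] at h
    filter_upwards [h] with w hw
    rcases eq_or_ne w z with rfl | hwz
    · simp [wassersteinE_self hp₀]
    · exact (ENNReal.div_le_iff (edist_pos.2 hwz.symm).ne' (edist_ne_top _ _)).1 (hw hwz).le
  rw [ENNReal.div_le_iff (edist_pos.2 hxy).ne' (edist_ne_top _ _),
    ← ENNReal.div_le_iff' hc₀ hctop, hlen x y]
  refine le_iInf₂ fun γ hγ ↦ le_iInf₂ fun h0 h1 ↦ ?_
  rw [ENNReal.div_le_iff' hc₀ hctop, ← h0, ← h1]
  exact le_mul_pathLengthE_of_eventually_le (D := fun x y ↦ wassersteinE edist p (P x) (P y))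
    (fun z ↦ wassersteinE_self hp₀ _) (fun z w ↦ wassersteinE_comm p _ _)
    (fun z w v ↦ wassersteinE_triangle hp _ _ _) hloc hγ

end Contraction

lemma integral_measure_bind {M : Type*} [MeasurableSpace M] {P : M → Measure M}
    (hPmeas : Measurable P) {μ : Measure M} [IsProbabilityMeasure μ]
    (hPprob : ∀ x, IsProbabilityMeasure (P x)) {f : M → ℝ} (hf : Integrable f (μ.bind P)) :
    ∫ x, f x ∂(μ.bind P) = ∫ x, ∫ y, f y ∂(P x) ∂μ := by
  let κ : ProbabilityTheory.Kernel M M := ⟨P, hPmeas⟩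
  have hκ : ProbabilityTheory.IsMarkovKernel κ := ⟨hPprob⟩
  have hbind : (κ.comp (ProbabilityTheory.Kernel.const Unit μ)) () = μ.bind P := by
    rw [ProbabilityTheory.Kernel.comp_apply, ProbabilityTheory.Kernel.const_apply]
    rfl
  have h := ProbabilityTheory.Kernel.integral_comp (η := κ)
    (κ := ProbabilityTheory.Kernel.const Unit μ) (a := ()) (f := f) (hbind ▸ hf)
  rw [hbind, ProbabilityTheory.Kernel.const_apply] at h
  exact h

section Mixing

variable {M : Type*} [MetricSpace M] [MeasurableSpace M] [BorelSpace M]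
  [TopologicalSpace.SeparableSpace M] {p : ℝ} {P : M → Measure M} {C : NNReal}

lemma exists_measurable_denseSeq_edist_lt [Nonempty M] {ε : ℝ≥0∞} (hε : ε ≠ 0) :
    ∃ N : M → ℕ, Measurable N ∧ ∀ x, edist (TopologicalSpace.denseSeq M (N x)) x < ε := by
  classical
  have : SecondCountableTopology M := UniformSpace.secondCountable_of_separable M
  have hex (x : M) : ∃ k, edist (TopologicalSpace.denseSeq M k) x < ε :=
    (TopologicalSpace.denseRange_denseSeq M).exists_mem_open
      (Metric.isOpen_eball (x := x) (ε := ε)) ⟨x, Metric.mem_eball_self (pos_iff_ne_zero.2 hε)⟩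
  exact ⟨fun x ↦ Nat.find (hex x),
    measurable_find hex fun k ↦ measurableSet_lt (by fun_prop) measurable_const,
    fun x ↦ Nat.find_spec (hex x)⟩

lemma wassersteinE_bind_map_comp_le (hp : 1 ≤ p) (hPmeas : Measurable P)
    (hP : ∀ x y, wassersteinE edist p (P x) (P y) ≤ C * edist x y)
    {Ω : Type*} [MeasurableSpace Ω] (ρ : Measure Ω) [IsProbabilityMeasure ρ]
    {A B : Ω → ℕ} (hA : Measurable A) (hB : Measurable B) (q : ℕ → M) :
    wassersteinE edist p ((ρ.map fun ω ↦ q (A ω)).bind P) ((ρ.map fun ω ↦ q (B ω)).bind P) ≤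
      C * eLpNorm' (fun ω ↦ edist (q (A ω)) (q (B ω))) p ρ := by
  have hAB : Measurable fun ω ↦ (A ω, B ω) := hA.prodMk hB
  have := Measure.isProbabilityMeasure_map (μ := ρ) hAB.aemeasurable
  have h := wassersteinE_bind_map_le_of_countable hp hPmeas hP
    (ρ.map fun ω ↦ (A ω, B ω)) (fun i ↦ q i.1) (fun i ↦ q i.2)
  rwa [Measure.map_map (measurable_of_countable _) hAB,
    Measure.map_map (measurable_of_countable _) hAB,
    eLpNorm'_map_enorm (measurable_of_countable _) hAB] at h

variable [CompleteSpace M] [Nonempty M]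

lemma tendsto_wassersteinE_bind_map_denseSeq (hp : 1 ≤ p) (hPmeas : Measurable P)
    (hPprob : ∀ x, IsProbabilityMeasure (P x))
    (hP : ∀ x y, wassersteinE edist p (P x) (P y) ≤ C * edist x y)
    {N : ℕ → M → ℕ} (hN : ∀ n, Measurable (N n))
    (hNε : ∀ n x, edist (TopologicalSpace.denseSeq M (N n x)) x < 2⁻¹ ^ n)
    (μ : Measure M) [IsProbabilityMeasure μ] :
    Tendsto (fun n ↦ wassersteinE edist p
      ((μ.map fun x ↦ TopologicalSpace.denseSeq M (N n x)).bind P) (μ.bind P)) atTop (𝓝 0) := by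
  have hp₀ : 0 < p := one_pos.trans_le hp
  set q := TopologicalSpace.denseSeq M
  have hqN (n : ℕ) : Measurable fun x ↦ q (N n x) := (measurable_of_countable q).comp (hN n)
  have hbind (ν : Measure M) [IsProbabilityMeasure ν] : IsProbabilityMeasure (ν.bind P) :=
    isProbabilityMeasure_bind hPmeas.aemeasurable (ae_of_all _ hPprob)
  have hmap (n : ℕ) : IsProbabilityMeasure (μ.map fun x ↦ q (N n x)) :=
    Measure.isProbabilityMeasure_map (hqN n).aemeasurable
  have hsum : ∑' n : ℕ, ((C : ℝ≥0∞) * 2 + 1) * 2⁻¹ ^ n ≠ ⊤ := by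
    rw [ENNReal.tsum_mul_left, ENNReal.tsum_geometric, ENNReal.one_sub_inv_two, inv_inv]
    finiteness
  have hstep (n : ℕ) : wassersteinE edist p ((μ.map fun x ↦ q (N n x)).bind P)
      ((μ.map fun x ↦ q (N (n + 1) x)).bind P) < ((C : ℝ≥0∞) * 2 + 1) * 2⁻¹ ^ n := by
    have hpt (x : M) : edist (q (N n x)) (q (N (n + 1) x)) ≤ 2 * 2⁻¹ ^ n := by
      refine (edist_triangle_right _ _ x).trans ?_
      rw [two_mul]
      refine add_le_add (hNε n x).le ((hNε (n + 1) x).le.trans ?_)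
      exact pow_le_pow_right_of_le_one' (ENNReal.inv_le_one.2 one_le_two) n.le_succ
    calc _ ≤ (C : ℝ≥0∞) * (2 * 2⁻¹ ^ n) :=
          (wassersteinE_bind_map_comp_le hp hPmeas hP μ (hN n) (hN (n + 1)) q).trans
            (by gcongr; exact eLpNorm'_le_of_forall_le hp₀ hpt)
      _ < ((C : ℝ≥0∞) * 2 + 1) * 2⁻¹ ^ n := by
          rw [add_mul, one_mul, mul_assoc]
          exact ENNReal.lt_add_right (by finiteness) (by simp)
  obtain ⟨ν, hν, hlim⟩ := exists_tendsto_wassersteinE hp hsum hstep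
  suffices ν = μ.bind P from this ▸ hlim
  refine eq_of_tendsto_wassersteinE hp hlim fun f hb ⟨K, hK⟩ ↦ ?_
  have hint := integrable_of_lipschitzWith_of_bounded hK hb
  have hF : LipschitzWith ((K + 1) * C) fun x ↦ ∫ y, f y ∂(P x) := fun x y ↦ by
    refine (edist_integral_le_mul_wassersteinE hp (K := K + 1) (by positivity)
      (hK.weaken le_self_add) hb (P x) (P y)).trans ?_
    rw [ENNReal.coe_mul, mul_assoc]
    gcongr
    exact hP x y
  obtain ⟨R, hR⟩ := hb
  obtain ⟨o⟩ := ‹Nonempty M›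
  have hbound (x : M) : ‖∫ y, f y ∂(P x)‖ ≤ R + ‖f o‖ := by
    refine (norm_integral_le_of_norm_le_const (μ := P x) (C := R + ‖f o‖)
      (ae_of_all _ fun y ↦ ?_)).trans_eq (by simp)
    have h₁ := hR y o
    have h₂ := norm_sub_norm_le (f y) (f o)
    rw [dist_eq_norm] at h₁
    linarith
  have hptlim (x : M) : Tendsto (fun n ↦ q (N n x)) atTop (𝓝 x) := by
    rw [tendsto_iff_edist_tendsto_0]
    exact tendsto_of_tendsto_of_tendsto_of_le_of_le tendsto_const_nhds
      (ENNReal.tendsto_pow_atTop_nhds_zero_of_lt_one (by simp))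
      (fun _ ↦ zero_le) fun n ↦ (hNε n x).le
  have hmapint (n : ℕ) : ∫ x, f x ∂((μ.map fun x ↦ q (N n x)).bind P) =
      ∫ x, ∫ y, f y ∂(P (q (N n x))) ∂μ := by
    rw [integral_measure_bind hPmeas hPprob (hint _),
      integral_map (hqN n).aemeasurable hF.continuous.measurable.aestronglyMeasurable]
  simp only [hmapint, integral_measure_bind hPmeas hPprob (hint (μ.bind P))]
  exact tendsto_integral_of_dominated_convergence (fun _ ↦ R + ‖f o‖)
    (fun n ↦ (hF.continuous.measurable.comp (hqN n)).aestronglyMeasurable)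
    (integrable_const _) (fun n ↦ ae_of_all _ fun x ↦ hbound _)
    (ae_of_all _ fun x ↦ (hF.continuous.tendsto x).comp (hptlim x))

/-- A kernel that is Lipschitz into the Wasserstein space acts on probability measures with the
same Lipschitz constant. -/
lemma wassersteinE_bind_le (hp : 1 ≤ p) (hPmeas : Measurable P)
    (hPprob : ∀ x, IsProbabilityMeasure (P x))
    (hP : ∀ x y, wassersteinE edist p (P x) (P y) ≤ C * edist x y)
    (μ ν : Measure M) [IsProbabilityMeasure μ] [IsProbabilityMeasure ν] :
    wassersteinE edist p (μ.bind P) (ν.bind P) ≤ C * wassersteinE edist p μ ν := by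
  have hp₀ : 0 < p := one_pos.trans_le hp
  have : SecondCountableTopology M := UniformSpace.secondCountable_of_separable M
  have hbind (ν : Measure M) [IsProbabilityMeasure ν] : IsProbabilityMeasure (ν.bind P) :=
    isProbabilityMeasure_bind hPmeas.aemeasurable (ae_of_all _ hPprob)
  choose N hN hNε using fun n : ℕ ↦
    exists_measurable_denseSeq_edist_lt (M := M) (ε := 2⁻¹ ^ n) (by simp)
  have hμlim := tendsto_wassersteinE_bind_map_denseSeq hp hPmeas hPprob hP hN hNε μ
  have hνlim := tendsto_wassersteinE_bind_map_denseSeq hp hPmeas hPprob hP hN hNε ν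
  set q := TopologicalSpace.denseSeq M
  have hqN (n : ℕ) : Measurable fun x ↦ q (N n x) := (measurable_of_countable q).comp (hN n)
  have hmap (μ : Measure M) [IsProbabilityMeasure μ] (n : ℕ) :
      IsProbabilityMeasure (μ.map fun x ↦ q (N n x)) :=
    Measure.isProbabilityMeasure_map (hqN n).aemeasurable
  suffices key : ∀ η, IsCoupling η μ ν → wassersteinE edist p (μ.bind P) (ν.bind P) ≤
      C * eLpNorm' (fun z : M × M ↦ edist z.1 z.2) p η by
    obtain rfl | hC := eq_or_ne C 0
    · simpa using key (μ.prod ν) ⟨by simp, by simp⟩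
    · conv_rhs => rw [wassersteinE_eq_iInf_eLpNorm']
      simp only [ENNReal.mul_iInf_of_ne (ENNReal.coe_ne_zero.2 hC) ENNReal.coe_ne_top]
      exact le_iInf₂ key
  intro η hη
  have := hη.isProbabilityMeasure
  have hdisc (n : ℕ) : wassersteinE edist p ((μ.map fun x ↦ q (N n x)).bind P)
      ((ν.map fun x ↦ q (N n x)).bind P) ≤
        C * (eLpNorm' (fun z : M × M ↦ edist z.1 z.2) p η + 2 * 2⁻¹ ^ n) := by
    have h := wassersteinE_bind_map_comp_le hp hPmeas hP η
      ((hN n).comp measurable_fst) ((hN n).comp measurable_snd) q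
    have h₁ : (η.map fun z ↦ q (N n z.1)) = μ.map fun x ↦ q (N n x) := by
      rw [← hη.1, Measure.map_map (hqN n) measurable_fst]; rfl
    have h₂ : (η.map fun z ↦ q (N n z.2)) = ν.map fun x ↦ q (N n x) := by
      rw [← hη.2, Measure.map_map (hqN n) measurable_snd]; rfl
    simp only [Function.comp_apply, h₁, h₂] at h
    refine h.trans ?_
    gcongr
    calc eLpNorm' (fun z : M × M ↦ edist (q (N n z.1)) (q (N n z.2))) p η
        ≤ eLpNorm' (fun z : M × M ↦ edist z.1 z.2 + 2 * 2⁻¹ ^ n) p η := by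
          refine eLpNorm'_mono_of_le hp₀.le fun z ↦ ?_
          have h₃ := hNε n z.2
          rw [edist_comm] at h₃
          calc _ ≤ edist (q (N n z.1)) z.1 + edist z.1 z.2 + edist z.2 (q (N n z.2)) :=
                edist_triangle4 _ _ _ _
            _ ≤ 2⁻¹ ^ n + edist z.1 z.2 + 2⁻¹ ^ n :=
                add_le_add (add_le_add (hNε n z.1).le le_rfl) h₃.le
            _ = _ := by ring
      _ ≤ eLpNorm' (fun z : M × M ↦ edist z.1 z.2) p η
            + eLpNorm' (fun _ ↦ 2 * 2⁻¹ ^ n) p η :=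
          eLpNorm'_add_le_ennreal hp (by fun_prop) (by fun_prop)
      _ ≤ _ := by gcongr; exact eLpNorm'_le_of_forall_le hp₀ fun _ ↦ le_rfl
  have hpow : Tendsto (fun n : ℕ ↦ (2 : ℝ≥0∞) * 2⁻¹ ^ n) atTop (𝓝 0) := by
    simpa using ENNReal.Tendsto.const_mul
      (ENNReal.tendsto_pow_atTop_nhds_zero_of_lt_one (r := 2⁻¹) (by simp))
      (Or.inr ENNReal.ofNat_ne_top)
  have hlim : Tendsto (fun n ↦
      wassersteinE edist p ((μ.map fun x ↦ q (N n x)).bind P) (μ.bind P)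
        + (C * (eLpNorm' (fun z : M × M ↦ edist z.1 z.2) p η + 2 * 2⁻¹ ^ n)
          + wassersteinE edist p ((ν.map fun x ↦ q (N n x)).bind P) (ν.bind P))) atTop
      (𝓝 (0 + (C * (eLpNorm' (fun z : M × M ↦ edist z.1 z.2) p η + 0) + 0))) :=
    hμlim.add ((ENNReal.Tendsto.const_mul (tendsto_const_nhds.add hpow)
      (Or.inr ENNReal.coe_ne_top)).add hνlim)
  simp only [zero_add, add_zero] at hlim
  refine ge_of_tendsto' hlim fun n ↦ ?_
  refine (wassersteinE_triangle hp _ ((μ.map fun x ↦ q (N n x)).bind P) _).trans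
    (add_le_add (wassersteinE_comm p _ _).le ?_)
  exact (wassersteinE_triangle hp _ ((ν.map fun x ↦ q (N n x)).bind P) _).trans
    (add_le_add (hdisc n) le_rfl)

end Mixing

section KernelIterate

variable {M : Type*} [MeasurableSpace M] {P : M → Measure M}

lemma isProbabilityMeasure_kernelIterate (hPmeas : Measurable P)
    (hPprob : ∀ x, IsProbabilityMeasure (P x)) (t : ℕ) (μ : Measure M) [IsProbabilityMeasure μ] :
    IsProbabilityMeasure (kernelIterate P t μ) := by
  induction t with
  | zero => assumption
  | succ t ih => exact isProbabilityMeasure_bind hPmeas.aemeasurable (ae_of_all _ hPprob)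

lemma kernelIterate_succ' (P : M → Measure M) (t : ℕ) (μ : Measure M) :
    kernelIterate P (t + 1) μ = kernelIterate P t (μ.bind P) := by
  induction t with
  | zero => rfl
  | succ t ih => exact congrArg (Measure.bind · P) ih

lemma kernelIterate_of_bind_eq {μ : Measure M} (hμ : μ.bind P = μ) (t : ℕ) :
    kernelIterate P t μ = μ := by
  induction t with
  | zero => rfl
  | succ t ih => rw [kernelIterate_succ', hμ, ih]

end KernelIterate

section Contraction

variable {M : Type*} [MetricSpace M] [CompleteSpace M] [TopologicalSpace.SeparableSpace M]
  [MeasurableSpace M] [BorelSpace M] [Nonempty M] {p : ℝ} {P : M → Measure M} {C : NNReal}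

lemma wassersteinE_kernelIterate_le (hp : 1 ≤ p) (hPmeas : Measurable P)
    (hPprob : ∀ x, IsProbabilityMeasure (P x))
    (hP : ∀ x y, wassersteinE edist p (P x) (P y) ≤ C * edist x y)
    (t : ℕ) (μ ν : Measure M) [IsProbabilityMeasure μ] [IsProbabilityMeasure ν] :
    wassersteinE edist p (kernelIterate P t μ) (kernelIterate P t ν) ≤
      C ^ t * wassersteinE edist p μ ν := by
  induction t with
  | zero => simp [kernelIterate]
  | succ t ih =>
    have := isProbabilityMeasure_kernelIterate hPmeas hPprob t μ
    have := isProbabilityMeasure_kernelIterate hPmeas hPprob t ν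
    calc _ ≤ C * wassersteinE edist p (kernelIterate P t μ) (kernelIterate P t ν) :=
          wassersteinE_bind_le hp hPmeas hPprob hP _ _
      _ ≤ C * (C ^ t * wassersteinE edist p μ ν) := by gcongr
      _ = _ := by rw [pow_succ', mul_assoc]

/-- A kernel contracting the Wasserstein distance has at most one invariant measure. -/
lemma eq_of_bind_eq_of_contracting (hp : 1 ≤ p) (hdiam : Metric.ediam (Set.univ : Set M) ≠ ⊤)
    (hPmeas : Measurable P) (hPprob : ∀ x, IsProbabilityMeasure (P x))
    (hP : ∀ x y, wassersteinE edist p (P x) (P y) ≤ C * edist x y) (hC : C < 1)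
    {μ ν : Measure M} [IsProbabilityMeasure μ] [IsProbabilityMeasure ν]
    (hμ : μ.bind P = μ) (hν : ν.bind P = ν) : μ = ν := by
  have hfin : wassersteinE edist p μ ν ≠ ⊤ :=
    ne_top_of_le_ne_top hdiam (wassersteinE_le_ediam (one_pos.trans_le hp))
  refine eq_of_wassersteinE_eq_zero hp (by_contra fun h₀ ↦ ?_)
  have h := wassersteinE_bind_le hp hPmeas hPprob hP μ ν
  rw [hμ, hν] at h
  have hlt : (C : ℝ≥0∞) * wassersteinE edist p μ ν < 1 * wassersteinE edist p μ ν :=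
    ENNReal.mul_lt_mul_left h₀ hfin (by exact_mod_cast hC)
  exact (h.trans_lt hlt).ne (one_mul _).symm

/-- A kernel contracting the Wasserstein distance has an invariant measure. -/
lemma exists_bind_eq_of_contracting (hp : 1 ≤ p) (hdiam : Metric.ediam (Set.univ : Set M) ≠ ⊤)
    (hPmeas : Measurable P) (hPprob : ∀ x, IsProbabilityMeasure (P x))
    (hP : ∀ x y, wassersteinE edist p (P x) (P y) ≤ C * edist x y) (hC : C < 1) :
    ∃ μ : Measure M, IsProbabilityMeasure μ ∧ μ.bind P = μ := by
  have hp₀ : 0 < p := one_pos.trans_le hp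
  have hbind (ν : Measure M) [IsProbabilityMeasure ν] : IsProbabilityMeasure (ν.bind P) :=
    isProbabilityMeasure_bind hPmeas.aemeasurable (ae_of_all _ hPprob)
  obtain ⟨o⟩ := ‹Nonempty M›
  have hiter (t : ℕ) := isProbabilityMeasure_kernelIterate hPmeas hPprob t (Measure.dirac o)
  have hsum : ∑' t : ℕ,
      ((C : ℝ≥0∞) ^ t * Metric.ediam (Set.univ : Set M) + 2⁻¹ ^ t) ≠ ⊤ := by
    rw [ENNReal.tsum_add, ENNReal.tsum_mul_right, ENNReal.tsum_geometric, ENNReal.tsum_geometric,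
      ENNReal.one_sub_inv_two, inv_inv]
    have : (1 : ℝ≥0∞) - C ≠ 0 := (tsub_pos_of_lt (by exact_mod_cast hC)).ne'
    finiteness
  have hstep (t : ℕ) : wassersteinE edist p (kernelIterate P t (Measure.dirac o))
      (kernelIterate P (t + 1) (Measure.dirac o)) <
        (C : ℝ≥0∞) ^ t * Metric.ediam (Set.univ : Set M) + 2⁻¹ ^ t := by
    rw [kernelIterate_succ']
    refine ((wassersteinE_kernelIterate_le hp hPmeas hPprob hP t _ _).trans
      (by gcongr; exact wassersteinE_le_ediam hp₀)).trans_lt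
      (ENNReal.lt_add_right (by finiteness) (by simp))
  obtain ⟨μ, hμ, hlim⟩ := exists_tendsto_wassersteinE hp hsum hstep
  refine ⟨μ, hμ, (eq_of_wassersteinE_eq_zero hp (le_antisymm ?_ zero_le)).symm⟩
  have hlim' := (hlim.comp (tendsto_add_atTop_nat 1)).add
    (ENNReal.Tendsto.const_mul hlim (Or.inr (ENNReal.coe_ne_top (r := C))))
  rw [mul_zero, add_zero] at hlim'
  refine ge_of_tendsto' hlim' fun t ↦ ?_
  refine (wassersteinE_triangle hp μ (kernelIterate P (t + 1) (Measure.dirac o)) _).trans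
    (add_le_add (wassersteinE_comm p _ _).le ?_)
  exact wassersteinE_bind_le hp hPmeas hPprob hP _ _

end Contraction

lemma one_sub_pow_mul_le_of_inv_mul_log_le {κ D ε : ℝ} (hκ0 : 0 < κ) (hκ1 : κ ≤ 1) (hD : 0 ≤ D)
    (hε : 0 < ε) {t : ℕ} (ht : κ⁻¹ * Real.log (D / ε) ≤ t) : (1 - κ) ^ t * D ≤ ε := by
  obtain rfl | hD := hD.eq_or_lt
  · simpa using hε.le
  have hlog : Real.log (D / ε) ≤ κ * t := (inv_mul_le_iff₀ hκ0).1 ht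
  calc (1 - κ) ^ t * D ≤ Real.exp (-κ) ^ t * D := by
        have := sub_nonneg.2 hκ1
        gcongr
        exact Real.one_sub_le_exp_neg κ
    _ = Real.exp (-(κ * t)) * D := by rw [← Real.exp_nat_mul]; ring_nf
    _ ≤ Real.exp (-Real.log (D / ε)) * D := by gcongr
    _ = ε := by rw [Real.exp_neg, Real.exp_log (by positivity)]; field_simp

/-- **Corollary 1.** Let `(M,d)` be a Polish length space of finite diameter, `p ≥ 1`,
`κ ∈ (0,1]`, and let `P` be a Markov transition kernel on `M` with `x ↦ P_x` locally
`(1-κ)`-Lipschitz into `(Pr_{d,p}(M), W_{d,p})`.  Then `P` has a unique invariant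
probability measure `μ⋆`, and `W_{d,p}(μP^t, μ⋆) ≤ ε` for every probability measure `μ`
and every `t ≥ κ⁻¹ ln(diam(M)/ε)`; in particular `τ_{d,p}(ε) ≤ ⌈κ⁻¹ ln(diam(M)/ε)⌉`. -/
theorem contracting_kernel_unique_invariant_and_mixing
    {M : Type*} [MetricSpace M] [CompleteSpace M] [TopologicalSpace.SeparableSpace M]
    [MeasurableSpace M] [BorelSpace M] [Nonempty M]
    (hlen : IsLengthSpace M) (hdiam : EMetric.diam (Set.univ : Set M) ≠ ⊤)
    (p : ℝ) (hp : 1 ≤ p) (κ : ℝ) (hκ0 : 0 < κ) (hκ1 : κ ≤ 1)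
    (P : M → Measure M) (hPmeas : Measurable P)
    (hPprob : ∀ x, IsProbabilityMeasure (P x))
    (hPlip : LocallyLipWith (wassersteinE edist p) (1 - κ) P) :
    ∃ μstar : Measure M, IsProbabilityMeasure μstar ∧ μstar.bind P = μstar ∧
      (∀ ν : Measure M, IsProbabilityMeasure ν → ν.bind P = ν → ν = μstar) ∧
      ∀ ε : ℝ, 0 < ε → ∀ μ : Measure M, IsProbabilityMeasure μ → ∀ t : ℕ,
        κ⁻¹ * Real.log (Metric.diam (Set.univ : Set M) / ε) ≤ (t : ℝ) →
          wassersteinE edist p (kernelIterate P t μ) μstar ≤ ENNReal.ofReal ε := by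
  have hp₀ : 0 < p := one_pos.trans_le hp
  have hP : ∀ x y, wassersteinE edist p (P x) (P y) ≤ Real.toNNReal (1 - κ) * edist x y :=
    hlen.wassersteinE_le_mul_edist hp hPprob hPlip
  have hC : Real.toNNReal (1 - κ) < 1 := by
    rw [Real.toNNReal_lt_one]
    linarith
  obtain ⟨μstar, hprob, hinv⟩ := exists_bind_eq_of_contracting hp hdiam hPmeas hPprob hP hC
  refine ⟨μstar, hprob, hinv, fun ν hν hνinv ↦
    eq_of_bind_eq_of_contracting hp hdiam hPmeas hPprob hP hC hνinv hinv,
    fun ε hε μ hμ t ht ↦ ?_⟩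
  calc wassersteinE edist p (kernelIterate P t μ) μstar
      = wassersteinE edist p (kernelIterate P t μ) (kernelIterate P t μstar) := by
        rw [kernelIterate_of_bind_eq hinv]
    _ ≤ ENNReal.ofReal (1 - κ) ^ t * Metric.ediam (Set.univ : Set M) :=
        (wassersteinE_kernelIterate_le hp hPmeas hPprob hP t μ μstar).trans
          (mul_le_mul_right (wassersteinE_le_ediam hp₀) _)
    _ = ENNReal.ofReal ((1 - κ) ^ t * Metric.diam (Set.univ : Set M)) := by
        rw [ENNReal.ofReal_mul (by have := sub_nonneg.2 hκ1; positivity),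
          ENNReal.ofReal_pow (sub_nonneg.2 hκ1), Metric.diam,
          ENNReal.ofReal_toReal (a := Metric.ediam _) hdiam]
    _ ≤ ENNReal.ofReal ε := ENNReal.ofReal_le_ofReal
        (one_sub_pow_mul_le_of_inv_mul_log_le hκ0 hκ1 Metric.diam_nonneg hε ht)

end
end

section
/- Let ρ : [0,2π] → ℝ⁺ be a probability density with ρ_min := min_{θ∈[0,2π]} ρ(θ) > 0, and let K^(ρ) be Kac's walk on SO(n) with angle density ρ. Then for every integer n ≥ 2 and every ε > 0, the L² transportation-cost mixing time of K^(ρ) in the intrinsic metric D satisfies τ_{D,2}(ε) ≤ ⌈(n²/(2π·ρ_min)) ln(π√n / ε)⌉; that is, for all probability measures μ on SO(n) and all integers t ≥ (n²/(2π·ρ_min)) ln(π√n/ε), W_{D,2}(μ(K^(ρ))^t, H) ≤ ε, where H is the Haar probability measure on SO(n). -/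
open MeasureTheory ENNReal Filter Topology Matrix

noncomputable section

/-- The (Borel) product measurable structure on matrices. -/
instance matrixMeasurableSpace {m n R : Type*} [MeasurableSpace R] :
    MeasurableSpace (Matrix m n R) :=
  (inferInstance : MeasurableSpace (m → n → R))

/-- A Haar probability measure for the multiplicative set `S`, viewed as a measure on the
ambient space: a probability measure carried by `S` that is invariant under left and right
translations by all elements of `S`. -/
def IsHaarLike {X : Type*} [MeasurableSpace X] [Mul X] (S : Set X) (μ : Measure X) : Prop :=
  IsProbabilityMeasure μ ∧ μ Sᶜ = 0 ∧
    ∀ a ∈ S, μ.map (fun x => a * x) = μ ∧ μ.map (fun x => x * a) = μ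

/-- The Haar probability measure of a compact matrix group `S` (such as `SO(n)` or `U(n)`),
viewed as a measure on the ambient matrix space.  For such `S` a translation-invariant
probability measure exists and is unique, so `haarLike S` is *the* Haar probability
measure of `S`. -/
def haarLike {X : Type*} [MeasurableSpace X] [Mul X] (S : Set X) : Measure X := by
  classical exact if h : ∃ μ, IsHaarLike S μ then h.choose else 0

/-- The set of pairs `1 ≤ i < j ≤ n` of indices. -/
def pairs (n : ℕ) : Finset (Fin n × Fin n) :=
  Finset.univ.filter fun p => p.1 < p.2

/-- The special orthogonal group `SO(n)`, as a subset of the `n × n` real matrices. -/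
def SO (n : ℕ) : Set (Matrix (Fin n) (Fin n) ℝ) :=
  {a | a * aᵀ = 1 ∧ a.det = 1}

/-- The Hilbert–Schmidt (Frobenius) distance `‖a - b‖_hs = √(Tr((a-b)ᵀ(a-b)))` between real
matrices, as an `ℝ≥0∞`-valued distance function. -/
def hsDist {n : ℕ} (a b : Matrix (Fin n) (Fin n) ℝ) : ℝ≥0∞ :=
  ENNReal.ofReal (Real.sqrt (Matrix.trace ((a - b)ᵀ * (a - b))))

/-- The intrinsic (Riemannian/length) metric `D` on `SO(n)` induced by the Hilbert–Schmidt
norm: the infimum of `hs`-lengths of continuous paths inside `SO(n)`. -/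
def DSO (n : ℕ) (a b : Matrix (Fin n) (Fin n) ℝ) : ℝ≥0∞ :=
  intrinsicDistE hsDist (SO n) a b

/-- The rotation `R(i,j,θ)` by the angle `θ` of the plane spanned by the `i`-th and `j`-th
canonical basis vectors: `R e_i = cos θ e_i + sin θ e_j`, `R e_j = cos θ e_j - sin θ e_i`,
and `R e_k = e_k` for `k ∉ {i,j}`. -/
def kacRot {n : ℕ} (i j : Fin n) (θ : ℝ) : Matrix (Fin n) (Fin n) ℝ :=
  Matrix.of fun k l =>
    if k = i ∧ l = i then Real.cos θ
    else if k = j ∧ l = i then Real.sin θ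
    else if k = i ∧ l = j then -Real.sin θ
    else if k = j ∧ l = j then Real.cos θ
    else if k = l then 1 else 0

/-- The measure on angles with density `ρ` with respect to Lebesgue measure on `[0, 2π]`. -/
def angleMeasure (ρ : ℝ → ℝ) : Measure ℝ :=
  (MeasureTheory.volume.restrict (Set.Icc 0 (2 * Real.pi))).withDensity
    fun θ => ENNReal.ofReal (ρ θ)

/-- The transition kernel of Kac's random walk on `SO(n)` with angle density `ρ`:
`K^{(ρ)}_x = (1/C(n,2)) ∑_{1≤i<j≤n} ∫₀^{2π} δ_{R(i,j,θ)·x} ρ(θ) dθ`. -/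
def kacKernelRho (n : ℕ) (ρ : ℝ → ℝ) (x : Matrix (Fin n) (Fin n) ℝ) :
    Measure (Matrix (Fin n) (Fin n) ℝ) :=
  (n.choose 2 : ℝ≥0∞)⁻¹ •
    ∑ p ∈ pairs n, (angleMeasure ρ).map fun θ => kacRot p.1 p.2 θ * x

/-- The infinitesimal generator of the rotations `kacRot i j`. -/
def kacGen {n : ℕ} (i j : Fin n) : Matrix (Fin n) (Fin n) ℝ :=
  Matrix.single j i 1 - Matrix.single i j 1

/-- The orthogonal projection onto the coordinate plane spanned by `e_i` and `e_j`. -/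
def kacProj {n : ℕ} (i j : Fin n) : Matrix (Fin n) (Fin n) ℝ :=
  Matrix.single i i 1 + Matrix.single j j 1

lemma kacRot_eq {n : ℕ} {i j : Fin n} (hij : i ≠ j) (θ : ℝ) :
    kacRot i j θ = 1 + (Real.cos θ - 1) • kacProj i j + Real.sin θ • kacGen i j := by
  ext k l
  simp only [kacRot, kacProj, kacGen, Matrix.of_apply, Matrix.add_apply, Matrix.smul_apply,
    Matrix.sub_apply, Matrix.single_apply, Matrix.one_apply, smul_eq_mul]
  grind

lemma kacGen_mul_self {n : ℕ} {i j : Fin n} (hij : i ≠ j) :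
    kacGen i j * kacGen i j = -kacProj i j := by
  simp [kacGen, kacProj, sub_mul, mul_sub, Matrix.single_mul_single_of_ne, hij, hij.symm]
  abel

lemma kacProj_mul_self {n : ℕ} {i j : Fin n} (hij : i ≠ j) :
    kacProj i j * kacProj i j = kacProj i j := by
  simp [kacProj, add_mul, mul_add, Matrix.single_mul_single_of_ne, hij, hij.symm]

lemma kacProj_mul_kacGen {n : ℕ} {i j : Fin n} (hij : i ≠ j) :
    kacProj i j * kacGen i j = kacGen i j := by
  simp [kacProj, kacGen, add_mul, mul_sub, Matrix.single_mul_single_of_ne, hij, hij.symm]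

lemma kacGen_mul_kacProj {n : ℕ} {i j : Fin n} (hij : i ≠ j) :
    kacGen i j * kacProj i j = kacGen i j := by
  simp [kacProj, kacGen, sub_mul, mul_add, Matrix.single_mul_single_of_ne, hij, hij.symm]
  abel

lemma kacGen_transpose {n : ℕ} (i j : Fin n) : (kacGen i j)ᵀ = -kacGen i j := by
  simp [kacGen]

lemma kacProj_transpose {n : ℕ} (i j : Fin n) : (kacProj i j)ᵀ = kacProj i j := by
  simp [kacProj]

lemma kacRot_add {n : ℕ} {i j : Fin n} (hij : i ≠ j) (θ φ : ℝ) :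
    kacRot i j (θ + φ) = kacRot i j θ * kacRot i j φ := by
  simp only [kacRot_eq hij, mul_add, add_mul, one_mul, mul_one, Matrix.smul_mul, Matrix.mul_smul,
    kacGen_mul_self hij, kacProj_mul_self hij, kacProj_mul_kacGen hij, kacGen_mul_kacProj hij,
    Real.cos_add, Real.sin_add]
  module

lemma kacRot_transpose {n : ℕ} {i j : Fin n} (hij : i ≠ j) (θ : ℝ) :
    (kacRot i j θ)ᵀ = kacRot i j (-θ) := by
  simp [kacRot_eq hij, kacGen_transpose, kacProj_transpose]

lemma kacRot_zero {n : ℕ} {i j : Fin n} (hij : i ≠ j) : kacRot i j 0 = 1 := by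
  simp [kacRot_eq hij]

lemma kacRot_mem {n : ℕ} {i j : Fin n} (hij : i ≠ j) (θ : ℝ) : kacRot i j θ ∈ SO n := by
  have h : ∀ θ, kacRot i j θ * (kacRot i j θ)ᵀ = 1 := fun θ => by
    rw [kacRot_transpose hij, ← kacRot_add hij, add_neg_cancel, kacRot_zero hij]
  refine ⟨h θ, ?_⟩
  have h2 := congrArg Matrix.det (h (θ / 2))
  rw [Matrix.det_mul, Matrix.det_transpose, Matrix.det_one] at h2
  rwa [← add_halves θ, kacRot_add hij, Matrix.det_mul]

lemma SO.transpose_mul {n : ℕ} {a : Matrix (Fin n) (Fin n) ℝ} (h : a ∈ SO n) : aᵀ * a = 1 :=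
  mul_eq_one_comm.1 h.1

lemma SO.mul_mem {n : ℕ} {a b : Matrix (Fin n) (Fin n) ℝ} (ha : a ∈ SO n) (hb : b ∈ SO n) :
    a * b ∈ SO n := by
  refine ⟨?_, by rw [Matrix.det_mul, ha.2, hb.2, mul_one]⟩
  rw [Matrix.transpose_mul, mul_assoc, ← mul_assoc b, hb.1, one_mul, ha.1]

lemma hasDerivAt_kacRot {n : ℕ} {i j : Fin n} (hij : i ≠ j) (θ : ℝ) (k l : Fin n) :
    HasDerivAt (fun θ => kacRot i j θ k l) ((kacRot i j θ * kacGen i j) k l) θ := by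
  have h : kacRot i j θ * kacGen i j =
      -Real.sin θ • kacProj i j + Real.cos θ • kacGen i j := by
    simp only [kacRot_eq hij, add_mul, one_mul, Matrix.smul_mul,
      kacProj_mul_kacGen hij, kacGen_mul_self hij]
    module
  rw [h]
  simp only [kacRot_eq hij, Matrix.add_apply, Matrix.smul_apply, smul_eq_mul]
  have := (((Real.hasDerivAt_cos θ).sub_const 1).mul_const (kacProj i j k l)).const_add
    ((1 : Matrix (Fin n) (Fin n) ℝ) k l) |>.add
    ((Real.hasDerivAt_sin θ).mul_const (kacGen i j k l))
  exact this

lemma continuous_kacRot {n : ℕ} (i j : Fin n) : Continuous (kacRot i j : ℝ → Matrix _ _ ℝ) := by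
  refine continuous_matrix fun k l => ?_
  simp only [kacRot, Matrix.of_apply]
  split_ifs <;> fun_prop

lemma kacRot_periodic {n : ℕ} (i j : Fin n) (θ : ℝ) :
    kacRot i j (θ + 2 * Real.pi) = kacRot i j θ := by
  simp [kacRot]

/-- The trajectory `γ` moves in `SO(n)` with the continuous skew-symmetric velocity field `a`,
in the sense that `γ' = a γ`. -/
structure IsSOPath {n : ℕ} (γ a : ℝ → Matrix (Fin n) (Fin n) ℝ) : Prop where
  mem : ∀ u, γ u ∈ SO n
  skew : ∀ u, (a u)ᵀ = -a u
  cont : Continuous a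
  deriv : ∀ u k l, HasDerivAt (fun v => γ v k l) ((a u * γ u) k l) u

/-- Squared Hilbert–Schmidt norm. -/
def hsSq {n : ℕ} (a : Matrix (Fin n) (Fin n) ℝ) : ℝ := Matrix.trace (aᵀ * a)

lemma hsSq_eq_sum {n : ℕ} (a : Matrix (Fin n) (Fin n) ℝ) : hsSq a = ∑ k, ∑ l, a k l ^ 2 := by
  simp only [hsSq, Matrix.trace, Matrix.diag, Matrix.mul_apply, Matrix.transpose_apply]
  rw [Finset.sum_comm]
  simp [sq]

lemma hsSq_nonneg {n : ℕ} (a : Matrix (Fin n) (Fin n) ℝ) : 0 ≤ hsSq a := by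
  rw [hsSq_eq_sum]; positivity

lemma hsSq_mul_right {n : ℕ} (a : Matrix (Fin n) (Fin n) ℝ) {g : Matrix (Fin n) (Fin n) ℝ}
    (hg : g ∈ SO n) : hsSq (a * g) = hsSq a := by
  rw [hsSq, Matrix.transpose_mul, Matrix.trace_mul_comm, mul_assoc, ← mul_assoc g, hg.1, one_mul,
    Matrix.trace_mul_comm, hsSq]

lemma hsSq_transpose {n : ℕ} (a : Matrix (Fin n) (Fin n) ℝ) : hsSq aᵀ = hsSq a := by
  rw [hsSq, Matrix.transpose_transpose, Matrix.trace_mul_comm, hsSq]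

lemma SO.transpose_mem {n : ℕ} {a : Matrix (Fin n) (Fin n) ℝ} (h : a ∈ SO n) : aᵀ ∈ SO n :=
  ⟨by rw [Matrix.transpose_transpose, SO.transpose_mul h], by rw [Matrix.det_transpose, h.2]⟩

lemma hsSq_conj {n : ℕ} (a : Matrix (Fin n) (Fin n) ℝ) {g : Matrix (Fin n) (Fin n) ℝ}
    (hg : g ∈ SO n) : hsSq (g * a * gᵀ) = hsSq a := by
  rw [hsSq_mul_right _ (SO.transpose_mem hg), ← hsSq_transpose, Matrix.transpose_mul,
    hsSq_mul_right _ (SO.transpose_mem hg), hsSq_transpose]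

lemma continuous_hsSq {n : ℕ} : Continuous (hsSq : Matrix (Fin n) (Fin n) ℝ → ℝ) := by
  unfold hsSq
  fun_prop

/-- Subtracting from a skew-symmetric matrix its component along `kacGen i j`. -/
lemma hsSq_sub_kacGen {n : ℕ} {i j : Fin n} (hij : i ≠ j) {a : Matrix (Fin n) (Fin n) ℝ}
    (ha : aᵀ = -a) : hsSq (a - a j i • kacGen i j) = hsSq a - 2 * a j i ^ 2 := by
  have h1 : a i j = - a j i := by simpa using congrFun₂ ha j i
  have h2 : hsSq (a - a j i • kacGen i j) = hsSq a + a j i * Matrix.trace (a * kacGen i j)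
      + a j i * Matrix.trace (kacGen i j * a)
      + a j i ^ 2 * Matrix.trace (kacProj i j) := by
    simp only [hsSq, Matrix.transpose_sub, Matrix.transpose_smul, kacGen_transpose, ha, sub_mul,
      mul_sub, Matrix.smul_mul, Matrix.mul_smul, neg_mul, kacGen_mul_self hij,
      Matrix.trace_sub, Matrix.trace_smul, Matrix.trace_neg, smul_eq_mul, smul_neg]
    ring
  have h3 : Matrix.trace (a * kacGen i j) = -2 * a j i := by
    simp [kacGen, mul_sub, Matrix.trace_sub, Matrix.trace_mul_single, h1]
    ring
  rw [h2, Matrix.trace_mul_comm (kacGen i j), h3]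
  simp [kacProj, Matrix.trace_add]
  ring

lemma sum_pairs_skew {n : ℕ} {a : Matrix (Fin n) (Fin n) ℝ} (ha : aᵀ = -a) :
    ∑ p ∈ pairs n, 2 * a p.2 p.1 ^ 2 = hsSq a := by
  have h : ∀ i j, a i j ^ 2 = a j i ^ 2 := fun i j => by
    have : a i j = - a j i := by simpa using congrFun₂ ha j i
    rw [this, neg_sq]
  have hd : ∀ i, a i i = 0 := fun i => by
    have : a i i = - a i i := by simpa using congrFun₂ ha i i
    linarith
  rw [hsSq_eq_sum, pairs, Finset.sum_filter, ← Finset.univ_product_univ, Finset.sum_product]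
  have e : ∀ i j, a i j ^ 2 = (if i < j then a j i ^ 2 else 0) + (if j < i then a i j ^ 2 else 0) := by
    intro i j
    rcases lt_trichotomy i j with hlt | rfl | hlt
    · simp [hlt, hlt.not_gt, h i j]
    · simp [hd]
    · simp [hlt, hlt.not_gt]
  rw [Finset.sum_congr rfl fun i _ => Finset.sum_congr rfl fun j _ => e i j]
  simp_rw [Finset.sum_add_distrib]
  rw [Finset.sum_comm (f := fun i j => if j < i then a i j ^ 2 else 0), ← two_mul, Finset.mul_sum]
  refine Finset.sum_congr rfl fun i _ => ?_
  rw [Finset.mul_sum]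
  refine Finset.sum_congr rfl fun j _ => ?_
  split_ifs <;> simp

lemma card_pairs (n : ℕ) : (pairs n).card = n.choose 2 := by
  rw [pairs, Finset.card_filter, ← Finset.univ_product_univ, Finset.sum_product_right,
    Nat.choose_two_right, ← Finset.sum_range_id, ← Fin.sum_univ_eq_sum_range (fun i => i)]
  refine Finset.sum_congr rfl fun j _ => ?_
  rw [← Finset.card_filter, ← Fin.card_Iio j]
  congr 1
  ext; simp

/-- The energy over `[0,1]` of a curve with velocity field `a`. -/
def energy {n : ℕ} (a : ℝ → Matrix (Fin n) (Fin n) ℝ) : ℝ := ∫ u in (0 : ℝ)..1, hsSq (a u)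

lemma energy_nonneg {n : ℕ} (a : ℝ → Matrix (Fin n) (Fin n) ℝ) : 0 ≤ energy a :=
  intervalIntegral.integral_nonneg zero_le_one fun _ _ => hsSq_nonneg _

lemma IsSOPath.continuous {n : ℕ} {γ a : ℝ → Matrix (Fin n) (Fin n) ℝ} (h : IsSOPath γ a) :
    Continuous γ :=
  continuous_matrix fun k l => continuous_iff_continuousAt.2 fun u => (h.deriv u k l).continuousAt

lemma hasDerivAt_matrix_mul {n : ℕ} {A B : ℝ → Matrix (Fin n) (Fin n) ℝ}
    {A' B' : Matrix (Fin n) (Fin n) ℝ} {u : ℝ}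
    (hA : ∀ k l, HasDerivAt (fun v => A v k l) (A' k l) u)
    (hB : ∀ k l, HasDerivAt (fun v => B v k l) (B' k l) u) (k l : Fin n) :
    HasDerivAt (fun v => (A v * B v) k l) ((A' * B u + A u * B') k l) u := by
  simp only [Matrix.mul_apply, Matrix.add_apply, ← Finset.sum_add_distrib]
  exact HasDerivAt.fun_sum fun m _ => (hA k m).mul (hB m l)

/-- Rotating a path by a time-dependent angle `φ` in a fixed coordinate plane. -/
lemma IsSOPath.kacRot_mul {n : ℕ} {γ a : ℝ → Matrix (Fin n) (Fin n) ℝ} (h : IsSOPath γ a)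
    {i j : Fin n} (hij : i ≠ j) {φ φ' : ℝ → ℝ} (hφ : ∀ u, HasDerivAt φ (φ' u) u)
    (hφ' : Continuous φ') :
    IsSOPath (fun u => kacRot i j (φ u) * γ u)
      (fun u => kacRot i j (φ u) * (a u + φ' u • kacGen i j) * (kacRot i j (φ u))ᵀ) where
  mem u := SO.mul_mem (kacRot_mem hij _) (h.mem u)
  skew u := by
    rw [Matrix.transpose_mul, Matrix.transpose_mul, Matrix.transpose_transpose,
      Matrix.transpose_add, h.skew, Matrix.transpose_smul, kacGen_transpose, ← mul_assoc]
    simp only [mul_add, add_mul, mul_neg, neg_mul, smul_neg, neg_add]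
  cont := by
    have hc : Continuous φ := continuous_iff_continuousAt.2 fun u => (hφ u).continuousAt
    have := (continuous_kacRot i j).comp hc
    have := h.cont
    fun_prop
  deriv u k l := by
    have h1 : ∀ k l, HasDerivAt (fun v => kacRot i j (φ v) k l)
        ((φ' u • (kacRot i j (φ u) * kacGen i j)) k l) u := fun k l => by
      have := (hasDerivAt_kacRot hij (φ u) k l).comp u (hφ u)
      rw [mul_comm] at this
      exact this
    have := hasDerivAt_matrix_mul h1 (h.deriv u) k l
    have hR := SO.transpose_mul (kacRot_mem hij (φ u))
    convert this using 2
    rw [mul_assoc, ← mul_assoc _ᵀ, hR, one_mul]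
    simp only [mul_add, add_mul, Matrix.smul_mul, Matrix.mul_smul, mul_assoc]
    rw [add_comm]

lemma hsDist_path_le {n : ℕ} {γ a : ℝ → Matrix (Fin n) (Fin n) ℝ} (h : IsSOPath γ a)
    {s t : ℝ} (hst : s ≤ t) :
    hsDist (γ s) (γ t) ≤ ENNReal.ofReal (∫ u in s..t, √(hsSq (a u))) := by
  apply ENNReal.ofReal_le_ofReal
  change √(hsSq (γ s - γ t)) ≤ _
  have hca := h.cont
  have hcγ := h.continuous
  have hci : Continuous fun u => √(hsSq (a u)) := (continuous_hsSq.comp hca).sqrt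
  set B := γ s - γ t with hB
  have hI : 0 ≤ ∫ u in s..t, √(hsSq (a u)) :=
    intervalIntegral.integral_nonneg hst fun _ _ => Real.sqrt_nonneg _
  have hentry : ∀ k l, Continuous fun u => (a u * γ u) k l := fun k l => by fun_prop
  have hFTC : ∀ k l, B k l = -∫ u in s..t, (a u * γ u) k l := fun k l => by
    rw [intervalIntegral.integral_eq_sub_of_hasDerivAt (fun u _ => h.deriv u k l)
      ((hentry k l).intervalIntegrable _ _)]
    simp [hB]
  have key : hsSq B = ∫ u in s..t, -∑ k, ∑ l, B k l * (a u * γ u) k l := by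
    rw [intervalIntegral.integral_neg, intervalIntegral.integral_finsetSum]
    · rw [hsSq_eq_sum, ← Finset.sum_neg_distrib]
      refine Finset.sum_congr rfl fun k _ => ?_
      rw [intervalIntegral.integral_finsetSum, ← Finset.sum_neg_distrib]
      · refine Finset.sum_congr rfl fun l _ => ?_
        rw [intervalIntegral.integral_const_mul, sq, ← mul_neg, ← hFTC]
      · intro l _
        exact ((hentry k l).const_mul _).intervalIntegrable _ _
    · intro k _
      exact (continuous_finsetSum _ fun l _ => (hentry k l).const_mul _).intervalIntegrable _ _
  have hle : hsSq B ≤ √(hsSq B) * ∫ u in s..t, √(hsSq (a u)) := by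
    conv_lhs => rw [key]
    rw [← intervalIntegral.integral_const_mul]
    refine intervalIntegral.integral_mono_on hst ?_ ?_ fun u _ => ?_
    · exact (continuous_finsetSum _ fun k _ => continuous_finsetSum _ fun l _ =>
        (hentry k l).const_mul _).neg.intervalIntegrable _ _
    · exact (hci.const_mul _).intervalIntegrable _ _
    · have cs := Finset.sum_mul_sq_le_sq_mul_sq Finset.univ
        (fun p : Fin n × Fin n => B p.1 p.2) (fun p => (a u * γ u) p.1 p.2)
      simp only [← Finset.univ_product_univ, Finset.sum_product] at cs
      rw [← hsSq_eq_sum, ← hsSq_eq_sum, hsSq_mul_right _ (h.mem u)] at cs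
      rw [← Real.sqrt_mul (hsSq_nonneg B)]
      exact (neg_le_abs _).trans (Real.abs_le_sqrt cs)
  rcases eq_or_lt_of_le (Real.sqrt_nonneg (hsSq B)) with h0 | h0
  · rwa [← h0]
  · refine le_of_mul_le_mul_left ?_ h0
    rwa [Real.mul_self_sqrt (hsSq_nonneg B)]

lemma pathLengthE_le {n : ℕ} {γ a : ℝ → Matrix (Fin n) (Fin n) ℝ} (h : IsSOPath γ a) :
    pathLengthE hsDist γ ≤ ENNReal.ofReal (∫ u in (0 : ℝ)..1, √(hsSq (a u))) := by
  have hci : Continuous fun u => √(hsSq (a u)) := (continuous_hsSq.comp h.cont).sqrt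
  refine iSup_le fun k => iSup_le fun t => iSup_le fun ht => iSup_le fun h0 => iSup_le fun h1 => ?_
  refine (Finset.sum_le_sum fun i _ => hsDist_path_le h (ht i.castSucc_lt_succ.le)).trans ?_
  rw [← ENNReal.ofReal_sum_of_nonneg fun i _ => intervalIntegral.integral_nonneg
    (ht i.castSucc_lt_succ.le) fun _ _ => Real.sqrt_nonneg _]
  refine le_of_eq (congrArg _ ?_)
  set F : ℝ → ℝ := fun x => ∫ u in (0 : ℝ)..x, √(hsSq (a u))
  have hF : ∀ x y, ∫ u in x..y, √(hsSq (a u)) = F y - F x := fun x y =>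
    (intervalIntegral.integral_interval_sub_left (hci.intervalIntegrable _ _)
      (hci.intervalIntegrable _ _)).symm
  have tel : ∀ (k : ℕ) (f : Fin (k + 1) → ℝ),
      ∑ i : Fin k, (f i.succ - f i.castSucc) = f (Fin.last k) - f 0 := fun k f => by
    rw [Finset.sum_sub_distrib, sub_eq_sub_iff_add_eq_add, add_comm, ← Fin.sum_univ_succ,
      Fin.sum_univ_castSucc, add_comm]
  simp_rw [hF]
  rw [tel k (fun i => F (t i)), h0, h1]

/-- The intrinsic distance between the endpoints of a path is at most the square root of its
energy. -/
lemma DSO_rpow_two_le {n : ℕ} {γ a : ℝ → Matrix (Fin n) (Fin n) ℝ} (h : IsSOPath γ a) :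
    DSO n (γ 0) (γ 1) ^ (2 : ℝ) ≤ ENNReal.ofReal (energy a) := by
  have hci : Continuous fun u => √(hsSq (a u)) := (continuous_hsSq.comp h.cont).sqrt
  have hD : DSO n (γ 0) (γ 1) ≤ ENNReal.ofReal (∫ u in (0 : ℝ)..1, √(hsSq (a u))) := by
    refine le_trans ?_ (pathLengthE_le h)
    unfold DSO intrinsicDistE
    exact iInf_le_of_le γ <| iInf_le_of_le h.continuous.continuousOn <|
      iInf_le_of_le (fun u _ => h.mem u) <| iInf_le_of_le rfl <| iInf_le_of_le rfl le_rfl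
  refine (ENNReal.rpow_le_rpow hD zero_le_two).trans ?_
  rw [ENNReal.rpow_two, ← ENNReal.ofReal_pow
    (intervalIntegral.integral_nonneg zero_le_one fun _ _ => Real.sqrt_nonneg _)]
  apply ENNReal.ofReal_le_ofReal
  set m := ∫ u in (0 : ℝ)..1, √(hsSq (a u)) with hm
  have h0 : 0 ≤ ∫ u in (0 : ℝ)..1, (√(hsSq (a u)) - m) ^ 2 :=
    intervalIntegral.integral_nonneg zero_le_one fun _ _ => sq_nonneg _
  have h1 : ∫ u in (0 : ℝ)..1, (√(hsSq (a u)) - m) ^ 2 = energy a - 2 * m * m + m ^ 2 := by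
    have : ∀ u, (√(hsSq (a u)) - m) ^ 2 = hsSq (a u) - 2 * m * √(hsSq (a u)) + m ^ 2 := fun u => by
      rw [sub_sq, Real.sq_sqrt (hsSq_nonneg _)]; ring
    simp_rw [this]
    have c1 : Continuous fun u => hsSq (a u) := continuous_hsSq.comp h.cont
    have c2 : Continuous fun u => 2 * m * √(hsSq (a u)) := hci.const_mul _
    have c3 : Continuous fun u => hsSq (a u) - 2 * m * √(hsSq (a u)) := c1.sub c2
    rw [intervalIntegral.integral_add (c3.intervalIntegrable _ _)
      (continuous_const.intervalIntegrable _ _),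
      intervalIntegral.integral_sub (c1.intervalIntegrable _ _) (c2.intervalIntegrable _ _),
      intervalIntegral.integral_const_mul, ← hm]
    simp [energy]
  nlinarith

instance matrix_borelSpace {m n : Type*} [Countable m] [Countable n] :
    BorelSpace (Matrix m n ℝ) :=
  inferInstanceAs (BorelSpace (m → n → ℝ))

instance matrix_secondCountable {m n : Type*} [Countable m] [Countable n] :
    SecondCountableTopology (Matrix m n ℝ) :=
  inferInstanceAs (SecondCountableTopology (m → n → ℝ))

instance matrix_metrizableSpace {m n : Type*} [Fintype m] [Fintype n] :
    TopologicalSpace.MetrizableSpace (Matrix m n ℝ) :=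
  inferInstanceAs (TopologicalSpace.MetrizableSpace (m → n → ℝ))

lemma measurable_kacRot {n : ℕ} (i j : Fin n) : Measurable (kacRot i j : ℝ → Matrix _ _ ℝ) :=
  (continuous_kacRot i j).measurable

lemma measurable_matrix_entry {n : ℕ} (i j : Fin n) :
    Measurable fun a : Matrix (Fin n) (Fin n) ℝ => a i j :=
  (continuous_id.matrix_elem i j).measurable

/-- The uniform part, of density `c`, of the angle distribution. -/
def uniformAngle (c : ℝ) : Measure ℝ :=
  ENNReal.ofReal c • volume.restrict (Set.Icc 0 (2 * Real.pi))

/-- The remaining part, of density `ρ - c`, of the angle distribution. -/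
def excessAngle (ρ : ℝ → ℝ) (c : ℝ) : Measure ℝ :=
  (volume.restrict (Set.Icc 0 (2 * Real.pi))).withDensity fun θ => ENNReal.ofReal (ρ θ - c)

lemma angleMeasure_eq_add {ρ : ℝ → ℝ} {c : ℝ} (hc : 0 ≤ c)
    (h : ∀ θ ∈ Set.Icc 0 (2 * Real.pi), c ≤ ρ θ) :
    angleMeasure ρ = uniformAngle c + excessAngle ρ c := by
  rw [angleMeasure, uniformAngle, excessAngle, ← withDensity_const,
    ← withDensity_add_left measurable_const]
  refine withDensity_congr_ae ?_
  filter_upwards [ae_restrict_mem measurableSet_Icc] with θ hθ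
  rw [Pi.add_apply, ← ENNReal.ofReal_add hc (sub_nonneg.2 (h θ hθ)), add_sub_cancel]

lemma uniformAngle_univ {c : ℝ} (hc : 0 ≤ c) :
    uniformAngle c Set.univ = ENNReal.ofReal (2 * Real.pi * c) := by
  rw [uniformAngle, Measure.smul_apply, Measure.restrict_apply_univ, Real.volume_Icc, sub_zero,
    smul_eq_mul, ← ENNReal.ofReal_mul hc, mul_comm]

lemma angleMeasure_univ {ρ : ℝ → ℝ} (hρcont : ContinuousOn ρ (Set.Icc 0 (2 * Real.pi)))
    (hρ : ∀ θ ∈ Set.Icc 0 (2 * Real.pi), 0 ≤ ρ θ)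
    (hρint : ∫ θ in Set.Icc 0 (2 * Real.pi), ρ θ = 1) : angleMeasure ρ Set.univ = 1 := by
  rw [angleMeasure, withDensity_apply _ MeasurableSet.univ, Measure.restrict_univ,
    ← ofReal_integral_eq_lintegral_ofReal, hρint, ENNReal.ofReal_one]
  · exact hρcont.integrableOn_Icc
  · filter_upwards [ae_restrict_mem measurableSet_Icc] with θ hθ using hρ θ hθ

lemma excessAngle_univ {ρ : ℝ → ℝ} (hρcont : ContinuousOn ρ (Set.Icc 0 (2 * Real.pi)))
    {c : ℝ} (hc : 0 ≤ c) (h : ∀ θ ∈ Set.Icc 0 (2 * Real.pi), c ≤ ρ θ)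
    (hρint : ∫ θ in Set.Icc 0 (2 * Real.pi), ρ θ = 1) :
    excessAngle ρ c Set.univ = ENNReal.ofReal (1 - 2 * Real.pi * c) := by
  have h1 := angleMeasure_univ hρcont (fun θ hθ => hc.trans (h θ hθ)) hρint
  rw [angleMeasure_eq_add hc h, Measure.add_apply, uniformAngle_univ hc] at h1
  rw [ENNReal.ofReal_sub _ (by positivity), ← ENNReal.ofReal_one.symm, ← h1,
    ENNReal.add_sub_cancel_left ENNReal.ofReal_ne_top]

lemma two_pi_mul_le_one {ρ : ℝ → ℝ} (hρcont : ContinuousOn ρ (Set.Icc 0 (2 * Real.pi)))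
    {c : ℝ} (hc : 0 ≤ c) (h : ∀ θ ∈ Set.Icc 0 (2 * Real.pi), c ≤ ρ θ)
    (hρint : ∫ θ in Set.Icc 0 (2 * Real.pi), ρ θ = 1) : 2 * Real.pi * c ≤ 1 := by
  have h1 := angleMeasure_univ hρcont (fun θ hθ => hc.trans (h θ hθ)) hρint
  rw [angleMeasure_eq_add hc h, Measure.add_apply, uniformAngle_univ hc] at h1
  have h2 : ENNReal.ofReal (2 * Real.pi * c) ≤ ENNReal.ofReal 1 := by
    rw [ENNReal.ofReal_one, ← h1]; exact le_self_add
  exact (ENNReal.ofReal_le_ofReal_iff zero_le_one).1 h2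

/-- Rotation invariance of the uniform distribution of angles. -/
lemma lintegral_uniformAngle_sub {c : ℝ} {f : ℝ → ℝ≥0∞}
    (hper : Function.Periodic f (2 * Real.pi)) (s : ℝ) :
    ∫⁻ θ, f (θ - s) ∂uniformAngle c = ∫⁻ θ, f θ ∂uniformAngle c := by
  have h2π := Real.two_pi_pos
  rw [uniformAngle, lintegral_smul_measure, lintegral_smul_measure]
  congr 1
  rw [restrict_Ioc_eq_restrict_Icc.symm]
  have e1 : ∫⁻ θ in Set.Ioc 0 (2 * Real.pi), f (θ - s) =
      ∫⁻ θ in Set.Ioc (-s) (-s + 2 * Real.pi), f θ := by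
    have := (measurePreserving_sub_right volume s).setLIntegral_comp_preimage_emb
      (MeasurableEquiv.subRight s).measurableEmbedding f (Set.Ioc (-s) (-s + 2 * Real.pi))
    rw [← this]
    simp
  rw [e1]
  have := IsAddFundamentalDomain.setLIntegral_eq (isAddFundamentalDomain_Ioc h2π (-s) volume)
    (isAddFundamentalDomain_Ioc h2π 0 volume) f hper.map_vadd_zmultiples
  rwa [zero_add] at this

instance sFinite_angleMeasure (ρ : ℝ → ℝ) : SFinite (angleMeasure ρ) := by
  unfold angleMeasure; infer_instance

instance sFinite_uniformAngle (c : ℝ) : SFinite (uniformAngle c) := by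
  unfold uniformAngle; infer_instance

instance sFinite_excessAngle (ρ : ℝ → ℝ) (c : ℝ) : SFinite (excessAngle ρ c) := by
  unfold excessAngle; infer_instance

lemma lintegral_kacKernelRho {n : ℕ} (ρ : ℝ → ℝ) {f : Matrix (Fin n) (Fin n) ℝ → ℝ≥0∞}
    (hf : Measurable f) (x : Matrix (Fin n) (Fin n) ℝ) :
    ∫⁻ y, f y ∂kacKernelRho n ρ x =
      (n.choose 2 : ℝ≥0∞)⁻¹ * ∑ p ∈ pairs n, ∫⁻ θ, f (kacRot p.1 p.2 θ * x) ∂angleMeasure ρ := by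
  rw [kacKernelRho, lintegral_smul_measure, lintegral_finsetSum_measure, smul_eq_mul]
  congr 1
  refine Finset.sum_congr rfl fun p _ => ?_
  rw [lintegral_map hf ((measurable_kacRot _ _).mul_const x)]

lemma measurable_lintegral_kacRot {n : ℕ} (ν : Measure ℝ) [SFinite ν] (i j : Fin n)
    {f : Matrix (Fin n) (Fin n) ℝ → ℝ≥0∞} (hf : Measurable f) :
    Measurable fun x => ∫⁻ θ, f (kacRot i j θ * x) ∂ν := by
  refine Measurable.lintegral_prod_right' (f := fun z : Matrix (Fin n) (Fin n) ℝ × ℝ =>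
    f (kacRot i j z.2 * z.1)) ?_
  exact hf.comp (((measurable_kacRot i j).comp measurable_snd).mul measurable_fst)

lemma measurable_kacKernelRho {n : ℕ} (ρ : ℝ → ℝ) : Measurable (kacKernelRho n ρ) := by
  refine Measure.measurable_of_measurable_coe _ fun s hs => ?_
  have hf : Measurable (s.indicator (1 : Matrix (Fin n) (Fin n) ℝ → ℝ≥0∞)) :=
    measurable_one.indicator hs
  simp_rw [← lintegral_indicator_one hs, lintegral_kacKernelRho ρ hf]
  exact (Finset.measurable_fun_sum _ fun p _ => measurable_lintegral_kacRot _ _ _ hf).const_mul _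

lemma measurable_intervalIntegral_param {Ω : Type*} [MeasurableSpace Ω] {f : Ω → ℝ → ℝ}
    (hc : ∀ ω, Continuous (f ω)) (hm : ∀ u, Measurable fun ω => f ω u) (x y : ℝ) :
    Measurable fun ω => ∫ u in x..y, f ω u := by
  have hj : StronglyMeasurable (Function.uncurry f) :=
    ((measurable_uncurry_of_continuous_of_measurable (u := fun u ω => f ω u) hc hm).comp
      measurable_swap).stronglyMeasurable
  simp only [intervalIntegral]
  exact (hj.integral_prod_right.sub hj.integral_prod_right).measurable

/-- `μ` and `ν` are the laws of the endpoints of a random path in `SO(n)` of mean energy at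
most `e`. -/
def PathCoupled {n : ℕ} (μ ν : Measure (Matrix (Fin n) (Fin n) ℝ)) (e : ℝ≥0∞) : Prop :=
  ∃ (Ω : Type) (_ : MeasurableSpace Ω) (P : Measure Ω)
    (γ a : Ω → ℝ → Matrix (Fin n) (Fin n) ℝ), SFinite P ∧ (∀ ω, IsSOPath (γ ω) (a ω)) ∧
    (∀ u, Measurable fun ω => γ ω u) ∧ (∀ u, Measurable fun ω => a ω u) ∧
    P.map (fun ω => γ ω 0) = μ ∧ P.map (fun ω => γ ω 1) = ν ∧
    ∫⁻ ω, ENNReal.ofReal (energy (a ω)) ∂P ≤ e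

lemma PathCoupled.wassersteinE_le {n : ℕ} {μ ν : Measure (Matrix (Fin n) (Fin n) ℝ)} {e : ℝ≥0∞}
    (h : PathCoupled μ ν e) : wassersteinE (DSO n) 2 μ ν ≤ e ^ (1 / 2 : ℝ) := by
  obtain ⟨Ω, _, P, γ, a, _, hp, hγ, -, rfl, rfl, he⟩ := h
  unfold wassersteinE
  refine iInf_le_of_le (P.map fun ω => (γ ω 0, γ ω 1)) (iInf_le_of_le ⟨?_, ?_⟩ ?_)
  · rw [Measure.map_map measurable_fst ((hγ 0).prodMk (hγ 1))]; rfl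
  · rw [Measure.map_map measurable_snd ((hγ 0).prodMk (hγ 1))]; rfl
  · refine ENNReal.rpow_le_rpow (((lintegral_map_le _ _).trans ?_).trans he) (by norm_num)
    exact lintegral_mono fun ω => DSO_rpow_two_le (hp ω)

/-- The effect of one step of the walk on laws of random matrices, where the angle of the uniform
part may be shifted by an arbitrary amount. -/
lemma lintegral_bind_kacKernelRho {n : ℕ} {ρ : ℝ → ℝ} {c : ℝ} (hc : 0 ≤ c)
    (h : ∀ θ ∈ Set.Icc 0 (2 * Real.pi), c ≤ ρ θ) {Ω : Type*} [MeasurableSpace Ω] {P : Measure Ω}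
    {X : Ω → Matrix (Fin n) (Fin n) ℝ} (hX : Measurable X) (s : Fin n × Fin n → Ω → ℝ)
    {f : Matrix (Fin n) (Fin n) ℝ → ℝ≥0∞} (hf : Measurable f) :
    ∫⁻ x, f x ∂(P.map X).bind (kacKernelRho n ρ) =
      ∑ p ∈ pairs n, (n.choose 2 : ℝ≥0∞)⁻¹ *
        (∫⁻ ω, ∫⁻ θ, f (kacRot p.1 p.2 (θ - s p ω) * X ω) ∂uniformAngle c ∂P +
          ∫⁻ ω, ∫⁻ θ, f (kacRot p.1 p.2 θ * X ω) ∂excessAngle ρ c ∂P) := by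
  rw [Measure.lintegral_bind (measurable_kacKernelRho ρ).aemeasurable hf.aemeasurable]
  simp_rw [lintegral_kacKernelRho ρ hf]
  have hm : ∀ (κ : Measure ℝ) [SFinite κ] (p : Fin n × Fin n),
      Measurable fun ω => ∫⁻ θ, f (kacRot p.1 p.2 θ * X ω) ∂κ := fun κ _ p =>
    (measurable_lintegral_kacRot κ p.1 p.2 hf).comp hX
  rw [lintegral_map ((Finset.measurable_fun_sum _ fun p _ =>
      measurable_lintegral_kacRot _ _ _ hf).const_mul _) hX,
    lintegral_const_mul _ (Finset.measurable_fun_sum _ fun p _ => hm (angleMeasure ρ) p),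
    lintegral_finsetSum _ fun p _ => hm (angleMeasure ρ) p,
    Finset.mul_sum]
  refine Finset.sum_congr rfl fun p _ => ?_
  rw [← lintegral_add_right _ (hm (excessAngle ρ c) p)]
  congr 2
  ext ω
  rw [angleMeasure_eq_add hc h, lintegral_add_measure,
    lintegral_uniformAngle_sub (f := fun θ => f (kacRot p.1 p.2 θ * X ω))]
  intro θ
  simp only [kacRot_periodic]

/-- The amount by which the second walker's angle is shifted. -/
def angleShift {n : ℕ} (a : ℝ → Matrix (Fin n) (Fin n) ℝ) (p : Fin n × Fin n) (b : Bool)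
    (u : ℝ) : ℝ := if b then ∫ v in (0 : ℝ)..u, a v p.2 p.1 else 0

/-- The path obtained from `γ` by one step of the coupled walk. -/
def stepPath {n : ℕ} (γ a : ℝ → Matrix (Fin n) (Fin n) ℝ) (p : Fin n × Fin n) (b : Bool)
    (θ u : ℝ) : Matrix (Fin n) (Fin n) ℝ :=
  kacRot p.1 p.2 (θ - angleShift a p b u) * γ u

/-- The velocity of `stepPath`. -/
def stepVel {n : ℕ} (a : ℝ → Matrix (Fin n) (Fin n) ℝ) (p : Fin n × Fin n) (b : Bool)
    (θ u : ℝ) : Matrix (Fin n) (Fin n) ℝ :=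
  kacRot p.1 p.2 (θ - angleShift a p b u) *
    (a u + (if b then -a u p.2 p.1 else 0) • kacGen p.1 p.2) *
    (kacRot p.1 p.2 (θ - angleShift a p b u))ᵀ

lemma IsSOPath.step {n : ℕ} {γ a : ℝ → Matrix (Fin n) (Fin n) ℝ} (h : IsSOPath γ a)
    {p : Fin n × Fin n} (hp : p.1 ≠ p.2) (b : Bool) (θ : ℝ) :
    IsSOPath (stepPath γ a p b θ) (stepVel a p b θ) := by
  have hc : Continuous fun u => a u p.2 p.1 := h.cont.matrix_elem _ _
  refine h.kacRot_mul hp (φ := fun u => θ - angleShift a p b u)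
    (φ' := fun u => if b then -a u p.2 p.1 else 0) (fun u => ?_) ?_
  · cases b
    · simpa [angleShift] using hasDerivAt_const u θ
    · simpa [angleShift] using
        (intervalIntegral.integral_hasDerivAt_right (hc.intervalIntegrable 0 u)
          (hc.stronglyMeasurableAtFilter _ _) hc.continuousAt).const_sub θ
  · cases b
    · simpa using continuous_const
    · simp only [if_true]
      exact hc.neg

lemma energy_stepVel {n : ℕ} {γ a : ℝ → Matrix (Fin n) (Fin n) ℝ} (h : IsSOPath γ a)
    {p : Fin n × Fin n} (hp : p.1 ≠ p.2) (θ : ℝ) :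
    energy (stepVel a p false θ) = energy a ∧
    energy (stepVel a p true θ) = energy a - ∫ u in (0 : ℝ)..1, 2 * a u p.2 p.1 ^ 2 := by
  have hc : Continuous fun u => a u p.2 p.1 := h.cont.matrix_elem _ _
  have c1 : Continuous fun u => hsSq (a u) := continuous_hsSq.comp h.cont
  have c2 : Continuous fun u => 2 * a u p.2 p.1 ^ 2 := (hc.pow 2).const_mul 2
  constructor
  · simp [energy, stepVel, hsSq_conj _ (kacRot_mem hp _)]
  · rw [energy, energy, ← intervalIntegral.integral_sub (c1.intervalIntegrable _ _)
      (c2.intervalIntegrable _ _)]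
    congr 1
    ext u
    rw [stepVel, hsSq_conj _ (kacRot_mem hp _), ← hsSq_sub_kacGen hp (h.skew u)]
    simp [sub_eq_add_neg]

lemma ofReal_mul_add_mul {d q r x y : ℝ} (hd : 0 ≤ d) (hq : 0 ≤ q) (hr : 0 ≤ r) (hx : 0 ≤ x)
    (hy : 0 ≤ y) : ENNReal.ofReal d * (ENNReal.ofReal q * ENNReal.ofReal x +
      ENNReal.ofReal r * ENNReal.ofReal y) = ENNReal.ofReal (d * (q * x + r * y)) := by
  rw [← ENNReal.ofReal_mul hq, ← ENNReal.ofReal_mul hr,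
    ← ENNReal.ofReal_add (by positivity) (by positivity), ← ENNReal.ofReal_mul hd]

lemma sum_energy_step {n : ℕ} (hn : 2 ≤ n) {γ a : ℝ → Matrix (Fin n) (Fin n) ℝ}
    (h : IsSOPath γ a) {q : ℝ} (hq : 0 ≤ q) (hq1 : q ≤ 1) :
    ∑ p ∈ pairs n, (n.choose 2 : ℝ≥0∞)⁻¹ *
      (ENNReal.ofReal q * ENNReal.ofReal (energy (stepVel a p true 0)) +
        ENNReal.ofReal (1 - q) * ENNReal.ofReal (energy (stepVel a p false 0))) =
      ENNReal.ofReal (1 - q / n.choose 2) * ENNReal.ofReal (energy a) := by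
  have hN : (0 : ℝ) < n.choose 2 := by exact_mod_cast Nat.choose_pos hn
  have hpne : ∀ p ∈ pairs n, p.1 ≠ p.2 := fun p hp => ((Finset.mem_filter.1 hp).2).ne
  have hN' : (n.choose 2 : ℝ≥0∞)⁻¹ = ENNReal.ofReal (n.choose 2 : ℝ)⁻¹ := by
    rw [ENNReal.ofReal_inv_of_pos hN, ENNReal.ofReal_natCast]
  have h1q : 0 ≤ 1 - q := sub_nonneg.2 hq1
  have hq2 : 0 ≤ 1 - q / n.choose 2 := by
    rw [sub_nonneg, div_le_one hN]
    exact hq1.trans (by exact_mod_cast Nat.choose_pos hn)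
  have e1 : ∀ p ∈ pairs n, (n.choose 2 : ℝ≥0∞)⁻¹ *
      (ENNReal.ofReal q * ENNReal.ofReal (energy (stepVel a p true 0)) +
        ENNReal.ofReal (1 - q) * ENNReal.ofReal (energy (stepVel a p false 0))) =
      ENNReal.ofReal ((n.choose 2 : ℝ)⁻¹ *
        (q * energy (stepVel a p true 0) + (1 - q) * energy (stepVel a p false 0))) := by
    intro p _
    rw [hN']
    exact ofReal_mul_add_mul (inv_nonneg.2 hN.le) hq h1q (energy_nonneg _) (energy_nonneg _)
  rw [Finset.sum_congr rfl e1, ← ENNReal.ofReal_sum_of_nonneg, ← ENNReal.ofReal_mul hq2]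
  · congr 1
    have e2 : ∀ p ∈ pairs n,
        q * energy (stepVel a p true 0) + (1 - q) * energy (stepVel a p false 0) =
          q * (energy a - ∫ u in (0 : ℝ)..1, 2 * a u p.2 p.1 ^ 2) + (1 - q) * energy a := by
      intro p hp
      rw [(energy_stepVel h (hpne p hp) 0).1, (energy_stepVel h (hpne p hp) 0).2]
    rw [← Finset.mul_sum, Finset.sum_congr rfl e2]
    have hs : ∑ p ∈ pairs n, ∫ u in (0 : ℝ)..1, 2 * a u p.2 p.1 ^ 2 = energy a := by
      rw [← intervalIntegral.integral_finsetSum, energy]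
      · congr 1
        ext u
        exact sum_pairs_skew (h.skew u)
      · intro p _
        have hc : Continuous fun u => 2 * a u p.2 p.1 ^ 2 :=
          ((h.cont.matrix_elem _ _).pow 2).const_mul 2
        exact hc.intervalIntegrable _ _
    rw [Finset.sum_add_distrib, ← Finset.mul_sum, Finset.sum_sub_distrib, hs, Finset.sum_const,
      Finset.sum_const, card_pairs, nsmul_eq_mul, nsmul_eq_mul]
    field_simp
    ring
  · intro p _
    exact mul_nonneg (inv_nonneg.2 hN.le) (add_nonneg (mul_nonneg hq (energy_nonneg _))
      (mul_nonneg h1q (energy_nonneg _)))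

lemma measurable_energy {n : ℕ} {Ω : Type*} [MeasurableSpace Ω]
    {γ a : Ω → ℝ → Matrix (Fin n) (Fin n) ℝ} (hp : ∀ ω, IsSOPath (γ ω) (a ω))
    (ha : ∀ u, Measurable fun ω => a ω u) : Measurable fun ω => energy (a ω) :=
  measurable_intervalIntegral_param (fun ω => continuous_hsSq.comp (hp ω).cont)
    (fun u => continuous_hsSq.measurable.comp (ha u)) 0 1

lemma measurable_angleShift {n : ℕ} {Ω : Type*} [MeasurableSpace Ω]
    {γ a : Ω → ℝ → Matrix (Fin n) (Fin n) ℝ} (hp : ∀ ω, IsSOPath (γ ω) (a ω))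
    (ha : ∀ u, Measurable fun ω => a ω u) (p : Fin n × Fin n) (b : Bool) (u : ℝ) :
    Measurable fun ω => angleShift (a ω) p b u := by
  cases b
  · simp [angleShift]
  · simpa [angleShift] using measurable_intervalIntegral_param
      (fun ω => (hp ω).cont.matrix_elem p.2 p.1)
      (fun u => (measurable_matrix_entry p.2 p.1).comp (ha u)) 0 u

lemma measurable_kacRot_sub_angleShift {n : ℕ} {Ω : Type*} [MeasurableSpace Ω]
    {γ a : Ω → ℝ → Matrix (Fin n) (Fin n) ℝ} (hp : ∀ ω, IsSOPath (γ ω) (a ω))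
    (ha : ∀ u, Measurable fun ω => a ω u) {θ : Ω → ℝ} (hθ : Measurable θ) (p : Fin n × Fin n)
    (b : Bool) (u : ℝ) : Measurable fun ω => kacRot p.1 p.2 (θ ω - angleShift (a ω) p b u) :=
  (measurable_kacRot _ _).comp (hθ.sub (measurable_angleShift hp ha p b u))

lemma measurable_stepPath {n : ℕ} {Ω : Type*} [MeasurableSpace Ω]
    {γ a : Ω → ℝ → Matrix (Fin n) (Fin n) ℝ} (hp : ∀ ω, IsSOPath (γ ω) (a ω))
    (hγ : ∀ u, Measurable fun ω => γ ω u) (ha : ∀ u, Measurable fun ω => a ω u) {θ : Ω → ℝ}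
    (hθ : Measurable θ) (p : Fin n × Fin n) (b : Bool) (u : ℝ) :
    Measurable fun ω => stepPath (γ ω) (a ω) p b (θ ω) u :=
  (measurable_kacRot_sub_angleShift hp ha hθ p b u).mul (hγ u)

lemma measurable_stepVel {n : ℕ} {Ω : Type*} [MeasurableSpace Ω]
    {γ a : Ω → ℝ → Matrix (Fin n) (Fin n) ℝ} (hp : ∀ ω, IsSOPath (γ ω) (a ω))
    (ha : ∀ u, Measurable fun ω => a ω u) {θ : Ω → ℝ} (hθ : Measurable θ) (p : Fin n × Fin n)
    (b : Bool) (u : ℝ) : Measurable fun ω => stepVel (a ω) p b (θ ω) u := by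
  have hrot := measurable_kacRot_sub_angleShift hp ha hθ p b u
  have hc : Continuous fun m : Matrix (Fin n) (Fin n) ℝ =>
      m + (if b then -m p.2 p.1 else 0) • kacGen p.1 p.2 := by
    cases b <;> simp <;> fun_prop
  exact (hrot.mul (hc.measurable.comp (ha u))).mul
    (continuous_id.matrix_transpose.measurable.comp hrot)

/-- One step of the walk contracts the mean energy of a random path joining two laws. -/
lemma PathCoupled.step {n : ℕ} (hn : 2 ≤ n) {ρ : ℝ → ℝ}
    (hρcont : ContinuousOn ρ (Set.Icc 0 (2 * Real.pi)))
    (hρint : ∫ θ in Set.Icc 0 (2 * Real.pi), ρ θ = 1)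
    {c : ℝ} (hc : 0 ≤ c) (hρ : ∀ θ ∈ Set.Icc 0 (2 * Real.pi), c ≤ ρ θ)
    {μ ν : Measure (Matrix (Fin n) (Fin n) ℝ)} {e : ℝ≥0∞} (h : PathCoupled μ ν e) :
    PathCoupled (μ.bind (kacKernelRho n ρ)) (ν.bind (kacKernelRho n ρ))
      (ENNReal.ofReal (1 - 2 * Real.pi * c / n.choose 2) * e) := by
  obtain ⟨Ω, _, P, γ, a, _, hp, hγ, ha, rfl, rfl, he⟩ := h
  have hpne : ∀ p : pairs n, p.1.1 ≠ p.1.2 := fun p => ((Finset.mem_filter.1 p.2).2).ne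
  set P' : Measure ((pairs n × Bool) × Ω × ℝ) := ∑ p : pairs n, (n.choose 2 : ℝ≥0∞)⁻¹ •
    ((P.prod (uniformAngle c)).map (Prod.mk (p, true)) +
      (P.prod (excessAngle ρ c)).map (Prod.mk (p, false))) with hP'
  have hint : ∀ f : (pairs n × Bool) × Ω × ℝ → ℝ≥0∞, Measurable f → ∫⁻ z, f z ∂P' =
      ∑ p : pairs n, (n.choose 2 : ℝ≥0∞)⁻¹ *
        (∫⁻ ω, ∫⁻ θ, f ((p, true), ω, θ) ∂uniformAngle c ∂P +
          ∫⁻ ω, ∫⁻ θ, f ((p, false), ω, θ) ∂excessAngle ρ c ∂P) := by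
    intro f hf
    rw [hP', lintegral_finsetSum_measure]
    refine Finset.sum_congr rfl fun p _ => ?_
    rw [lintegral_smul_measure, lintegral_add_measure, lintegral_map hf measurable_prodMk_left,
      lintegral_map hf measurable_prodMk_left,
      lintegral_prod (fun y => f ((p, true), y)) (hf.comp measurable_prodMk_left).aemeasurable,
      lintegral_prod (fun y => f ((p, false), y)) (hf.comp measurable_prodMk_left).aemeasurable,
      smul_eq_mul]
  have hsum : ∀ g : Fin n × Fin n → ℝ≥0∞, ∑ p : pairs n, g p = ∑ p ∈ pairs n, g p := fun g =>
    Finset.sum_coe_sort (pairs n) g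
  have hγ' : ∀ u, Measurable fun z : (pairs n × Bool) × Ω × ℝ =>
      stepPath (γ z.2.1) (a z.2.1) z.1.1 z.1.2 z.2.2 u := fun u =>
    measurable_from_prod_countable_right fun x => measurable_stepPath
      (γ := fun y : Ω × ℝ => γ y.1) (a := fun y : Ω × ℝ => a y.1) (fun y => hp y.1)
      (fun u => (hγ u).comp measurable_fst) (fun u => (ha u).comp measurable_fst)
      measurable_snd x.1 x.2 u
  have ha' : ∀ u, Measurable fun z : (pairs n × Bool) × Ω × ℝ =>
      stepVel (a z.2.1) z.1.1 z.1.2 z.2.2 u := fun u =>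
    measurable_from_prod_countable_right fun x => measurable_stepVel
      (γ := fun y : Ω × ℝ => γ y.1) (a := fun y : Ω × ℝ => a y.1) (fun y => hp y.1)
      (fun u => (ha u).comp measurable_fst) measurable_snd x.1 x.2 u
  have hp' : ∀ z : (pairs n × Bool) × Ω × ℝ,
      IsSOPath (stepPath (γ z.2.1) (a z.2.1) z.1.1 z.1.2 z.2.2)
        (stepVel (a z.2.1) z.1.1 z.1.2 z.2.2) := fun z => (hp z.2.1).step (hpne z.1.1) _ _
  have hmarg : ∀ u, P'.map (fun z => stepPath (γ z.2.1) (a z.2.1) z.1.1 z.1.2 z.2.2 u) =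
      (P.map fun ω => γ ω u).bind (kacKernelRho n ρ) := by
    intro u
    refine Measure.ext_of_lintegral _ fun f hf => ?_
    rw [lintegral_map hf (hγ' u),
      hint (fun z => f (stepPath (γ z.2.1) (a z.2.1) z.1.1 z.1.2 z.2.2 u)) (hf.comp (hγ' u)),
      lintegral_bind_kacKernelRho hc hρ (hγ u) (fun p ω => angleShift (a ω) p true u) hf, ← hsum]
    simp [stepPath, angleShift]
  refine ⟨(pairs n × Bool) × Ω × ℝ, inferInstance, P', _, _, ?_, hp', hγ', ha', hmarg 0, hmarg 1,
    ?_⟩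
  · rw [hP', ← Measure.sum_fintype]
    infer_instance
  · have hme : Measurable fun z : (pairs n × Bool) × Ω × ℝ =>
        ENNReal.ofReal (energy (stepVel (a z.2.1) z.1.1 z.1.2 z.2.2)) :=
      ENNReal.measurable_ofReal.comp (measurable_energy hp' ha')
    have hE : ∀ (p : pairs n) b, Measurable fun ω => ENNReal.ofReal (energy (stepVel (a ω) p b 0)) :=
      fun p b => by
        have hs := measurable_energy (fun ω => (hp ω).step (hpne p) b 0)
          (measurable_stepVel hp ha measurable_const p b)
        exact ENNReal.measurable_ofReal.comp hs
    have hθ : ∀ ω (p : pairs n) b θ, energy (stepVel (a ω) p b θ) = energy (stepVel (a ω) p b 0) := by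
      intro ω p b θ
      cases b
      · rw [(energy_stepVel (hp ω) (hpne p) θ).1, (energy_stepVel (hp ω) (hpne p) 0).1]
      · rw [(energy_stepVel (hp ω) (hpne p) θ).2, (energy_stepVel (hp ω) (hpne p) 0).2]
    rw [hint (fun z => ENNReal.ofReal (energy (stepVel (a z.2.1) z.1.1 z.1.2 z.2.2))) hme]
    simp only [hθ, lintegral_const, uniformAngle_univ hc, excessAngle_univ hρcont hc hρ hρint]
    refine le_trans (le_of_eq ?_) (mul_le_mul_right he _)
    rw [← lintegral_const_mul _ (measurable_energy hp ha).ennreal_ofReal]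
    simp_rw [← sum_energy_step hn (hp _) (by positivity : 0 ≤ 2 * Real.pi * c)
      (two_pi_mul_le_one hρcont hc hρ hρint), ← hsum]
    have hF : ∀ p : pairs n, Measurable fun ω =>
        ENNReal.ofReal (2 * Real.pi * c) * ENNReal.ofReal (energy (stepVel (a ω) p true 0)) +
          ENNReal.ofReal (1 - 2 * Real.pi * c) *
            ENNReal.ofReal (energy (stepVel (a ω) p false 0)) :=
      fun p => ((hE p true).const_mul _).add ((hE p false).const_mul _)
    rw [lintegral_finsetSum _ fun p _ => (hF p).const_mul _]
    refine Finset.sum_congr rfl fun p _ => ?_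
    rw [lintegral_const_mul _ (hF p), lintegral_add_left ((hE p true).const_mul _)]
    simp_rw [mul_comm (ENNReal.ofReal (energy _))]

lemma hasSum_sinc (x : ℝ) :
    HasSum (fun m : ℕ => (-1) ^ m * x ^ (2 * m) / ((2 * m + 1).factorial : ℝ)) (Real.sinc x) := by
  rcases eq_or_ne x 0 with rfl | hx
  · convert hasSum_ite_eq (0 : ℕ) (1 : ℝ) using 1
    · ext m
      rcases eq_or_ne m 0 with rfl | hm <;> simp [*]
    · simp
  · rw [Real.sinc_of_ne_zero hx]
    refine ((Real.hasSum_sin x).div_const x).congr_fun fun m => ?_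
    field_simp
    ring

/-- Euler's formula for a matrix whose square is minus the square of a diagonal matrix. -/
lemma exp_of_mul_self_eq_neg_diagonal {n : ℕ} {A : Matrix (Fin n) (Fin n) ℝ} {φ : Fin n → ℝ}
    (h : A * A = -diagonal fun i => φ i ^ 2) :
    NormedSpace.exp A =
      diagonal (fun i => Real.cos (φ i)) + diagonal (fun i => Real.sinc (φ i)) * A := by
  have h2 : ∀ m : ℕ, A ^ (2 * m) = diagonal fun i => (-1) ^ m * φ i ^ (2 * m) := fun m => by
    rw [pow_mul, sq, h, Matrix.diagonal_neg, Matrix.diagonal_pow]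
    congr 1
    ext i
    simp only [Pi.pow_apply]
    rw [neg_pow, ← pow_mul]
  rw [NormedSpace.exp_eq_tsum ℝ]
  refine HasSum.tsum_eq (HasSum.even_add_odd ?_ ?_)
  · refine Pi.hasSum.2 fun i => Pi.hasSum.2 fun j => ?_
    simp only [h2, Matrix.smul_apply, smul_eq_mul]
    rcases eq_or_ne i j with rfl | hij
    · simpa [div_eq_inv_mul] using Real.hasSum_cos (φ i)
    · simp [hij]
  · refine Pi.hasSum.2 fun i => Pi.hasSum.2 fun j => ?_
    simp only [pow_succ _ (2 * _), h2, Matrix.smul_apply, smul_eq_mul, Matrix.diagonal_mul]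
    refine ((hasSum_sinc (φ i)).mul_right (A i j)).congr_fun fun m => ?_
    ring

/-- The eigenvalue `-1` of a rotation has even multiplicity. -/
lemma SO.even_card_eq_neg_one {n : ℕ} {Q : Matrix (Fin n) (Fin n) ℝ} (hQ : Q ∈ SO n)
    {c : Fin n → ℝ} (hc : Q + Qᵀ = (2 : ℝ) • diagonal c) (hc1 : ∀ i, -1 ≤ c i)
    (hrow : ∀ i, c i = -1 → ∀ j, Q i j = if i = j then -1 else 0) :
    Even (Finset.univ.filter fun i => c i = -1).card := by
  set s : Fin n → ℝ := fun i => if c i = -1 then -1 else 1 with hs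
  set R := diagonal s * Q with hR
  have hs2 : diagonal s * diagonal s = 1 := by
    rw [Matrix.diagonal_mul_diagonal, ← Matrix.diagonal_one]
    congr 1
    ext i
    by_cases h : c i = -1 <;> simp [hs, h]
  have hRR : R * Rᵀ = 1 := by
    rw [hR, Matrix.transpose_mul, Matrix.diagonal_transpose, Matrix.mul_assoc,
      ← Matrix.mul_assoc Q, hQ.1, Matrix.one_mul, hs2]
  have hcol : ∀ i j, Q j i = 2 * diagonal c i j - Q i j := fun i j => by
    have := congrFun (congrFun hc i) j
    simp only [Matrix.add_apply, Matrix.transpose_apply, Matrix.smul_apply, smul_eq_mul] at this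
    linarith
  have hdet1 : (1 + R).det ≠ 0 := by
    intro h0
    obtain ⟨v, hv, hv0⟩ := Matrix.exists_mulVec_eq_zero_iff.2 h0
    apply hv
    have hq : ∑ i, v i * ((1 + R) *ᵥ v) i = 0 := by simp [hv0]
    have hsym : ∀ i j, R i j + R j i = if i = j then 2 * (if c i = -1 then 1 else c i) else 0 := by
      intro i j
      simp only [hR, Matrix.diagonal_mul, hs]
      have h1 := hcol i j
      rcases eq_or_ne i j with rfl | hij
      · simp only [Matrix.diagonal_apply_eq] at h1
        by_cases h : c i = -1
        · simp only [h, if_true] at h1 ⊢; linarith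
        · simp only [h, if_false, if_true]; linarith
      · simp only [Matrix.diagonal_apply_ne _ hij] at h1
        by_cases hi : c i = -1
        · have := hrow i hi j
          simp only [hij, if_false] at this ⊢
          rw [h1, this]; simp
        · by_cases hj : c j = -1
          · have := hrow j hj i
            simp only [hij.symm, hij, if_false] at this ⊢
            rw [this] at h1
            rw [this, show Q i j = 0 by linarith]; simp
          · simp only [hi, hj, hij, if_false]; linarith
    have hq2 : ∑ i, v i ^ 2 * (1 + if c i = -1 then 1 else c i) = 0 := by
      have e1 : ∑ i, v i * ((1 + R) *ᵥ v) i =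
          ∑ i, v i ^ 2 + ∑ i, ∑ j, v i * v j * R i j := by
        rw [← Finset.sum_add_distrib]
        refine Finset.sum_congr rfl fun i _ => ?_
        rw [Matrix.add_mulVec, Matrix.one_mulVec, Pi.add_apply, Matrix.mulVec, dotProduct, mul_add,
          Finset.mul_sum]
        congr 1
        · ring
        · exact Finset.sum_congr rfl fun j _ => by ring
      have e2 : ∑ i, ∑ j, v i * v j * R i j = ∑ i, ∑ j, v i * v j * R j i := by
        rw [Finset.sum_comm]
        exact Finset.sum_congr rfl fun i _ => Finset.sum_congr rfl fun j _ => by ring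
      have e3 : ∑ i, ∑ j, v i * v j * R i j + ∑ i, ∑ j, v i * v j * R j i =
          ∑ i, v i ^ 2 * (2 * if c i = -1 then 1 else c i) := by
        rw [← Finset.sum_add_distrib]
        refine Finset.sum_congr rfl fun i _ => ?_
        rw [← Finset.sum_add_distrib]
        simp_rw [← mul_add, hsym]
        simp [sq]
      have e4 : ∑ i, v i ^ 2 * (1 + if c i = -1 then 1 else c i) =
          ∑ i, v i ^ 2 + (∑ i, v i ^ 2 * (2 * if c i = -1 then 1 else c i)) / 2 := by
        rw [Finset.sum_div, ← Finset.sum_add_distrib]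
        exact Finset.sum_congr rfl fun i _ => by ring
      linarith
    have hpos : ∀ i, 0 < 1 + if c i = -1 then 1 else c i := fun i => by
      by_cases h : c i = -1
      · simp [h]
      · have := lt_of_le_of_ne (hc1 i) (Ne.symm h)
        simp only [h, if_false]; linarith
    ext i
    have := (Finset.sum_eq_zero_iff_of_nonneg fun i _ =>
      mul_nonneg (sq_nonneg (v i)) (hpos i).le).1 hq2 i (Finset.mem_univ i)
    simpa [(hpos i).ne'] using this
  have hdR : R.det = 1 := by
    have h1 : 1 + R = R * (1 + R)ᵀ := by
      rw [Matrix.transpose_add, Matrix.mul_add, hRR, Matrix.transpose_one, Matrix.mul_one, add_comm]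
    have h2 := congrArg Matrix.det h1
    rw [Matrix.det_mul, Matrix.det_transpose] at h2
    exact mul_right_cancel₀ hdet1 (by rw [one_mul]; exact h2.symm)
  rw [hR, Matrix.det_mul, hQ.2, mul_one, Matrix.det_diagonal, hs, Finset.prod_ite] at hdR
  simp only [Finset.prod_const, one_pow, mul_one] at hdR
  exact (neg_one_pow_eq_one_iff_even (by norm_num)).1 hdR

/-- A complex structure on the coordinates in a set of even cardinality. -/
lemma exists_skew_mul_self_eq {n : ℕ} {p : Fin n → Prop} [DecidablePred p]
    (h : Even (Finset.univ.filter p).card) :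
    ∃ J : Matrix (Fin n) (Fin n) ℝ, Jᵀ = -J ∧ J * J = -diagonal (fun i => if p i then 1 else 0) ∧
      ∀ i, ¬p i → ∀ j, J i j = 0 := by
  obtain ⟨m, hm⟩ := h
  have e : {i // p i} ≃ Fin m ⊕ Fin m := by
    refine Fintype.equivOfCardEq ?_
    rw [Fintype.card_subtype, hm, Fintype.card_sum, Fintype.card_fin]
  set W : Matrix (Fin n) (Fin m ⊕ Fin m) ℝ := Matrix.of fun i k =>
    if i = (e.symm k).1 then 1 else 0 with hW
  have hWW : Wᵀ * W = 1 := by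
    ext k l
    rw [Matrix.mul_apply, Matrix.one_apply]
    simp only [hW, Matrix.transpose_apply, Matrix.of_apply, mul_ite, mul_one, mul_zero,
      Finset.sum_ite_eq', Finset.mem_univ, if_true, Subtype.val_inj, EmbeddingLike.apply_eq_iff_eq,
      @eq_comm _ l k]
  have hWn : ∀ i, ¬p i → ∀ k, W i k = 0 := fun i hi k => by
    simp only [hW, Matrix.of_apply]
    rw [if_neg]
    rintro rfl
    exact hi (e.symm k).2
  have hWT : W * Wᵀ = diagonal (fun i => if p i then 1 else 0) := by
    ext i j
    rw [Matrix.mul_apply]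
    by_cases hi : p i
    · have : ∀ k, (i = (e.symm k).1) ↔ k = e ⟨i, hi⟩ := fun k => by
        rw [← e.symm_apply_eq, Subtype.ext_iff]
        exact eq_comm
      simp only [hW, Matrix.transpose_apply, Matrix.of_apply, this, ite_mul, one_mul, zero_mul,
        Finset.sum_ite_eq', Finset.mem_univ, if_true, Equiv.symm_apply_apply, Matrix.diagonal_apply,
        hi, @eq_comm _ j i]
    · simp [hWn i hi, Matrix.diagonal_apply, hi]
  refine ⟨W * Matrix.J (Fin m) ℝ * Wᵀ, ?_, ?_, fun i hi j => ?_⟩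
  · simp [Matrix.transpose_mul, Matrix.J_transpose, Matrix.mul_assoc]
  · rw [show W * Matrix.J (Fin m) ℝ * Wᵀ * (W * Matrix.J (Fin m) ℝ * Wᵀ) =
      W * Matrix.J (Fin m) ℝ * (Wᵀ * W) * Matrix.J (Fin m) ℝ * Wᵀ by simp only [Matrix.mul_assoc],
      hWW, Matrix.mul_one, Matrix.mul_assoc W, Matrix.J_squared]
    simp [hWT]
  · rw [Matrix.mul_assoc, Matrix.mul_apply]
    simp [hWn i hi]

lemma sq_div_sin_arccos {x : ℝ} (h0 : -1 ≤ x) (h1 : x ≤ 1) :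
    -((Real.arccos x / Real.sin (Real.arccos x)) ^ 2 * (x ^ 2 - 1)) +
      Real.pi ^ 2 * (if x = -1 then 1 else 0) = Real.arccos x ^ 2 := by
  by_cases hx : x = -1
  · subst hx; simp
  by_cases hx1 : x = 1
  · subst hx1; simp [hx]
  have hlt : 0 < 1 - x ^ 2 := by
    have : -1 < x := lt_of_le_of_ne h0 (Ne.symm hx)
    have : x < 1 := lt_of_le_of_ne h1 hx1
    nlinarith
  rw [Real.sin_arccos, div_pow, Real.sq_sqrt hlt.le]
  simp only [hx, if_false]
  field_simp
  ring

lemma sinc_mul_div_sin_arccos {x : ℝ} (h0 : -1 < x) (h1 : x < 1) :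
    Real.sinc (Real.arccos x) * (Real.arccos x / Real.sin (Real.arccos x)) = 1 := by
  have h : Real.arccos x ≠ 0 := by rw [Ne, Real.arccos_eq_zero]; linarith
  have hs : Real.sin (Real.arccos x) ≠ 0 := by
    rw [Real.sin_arccos]
    exact (Real.sqrt_pos.2 (by nlinarith)).ne'
  rw [Real.sinc_of_ne_zero h]
  field_simp

/-- A rotation whose symmetric part is diagonal has a skew-symmetric logarithm of
Hilbert–Schmidt norm at most `π√n`. -/
lemma SO.exists_log_of_diagonal {n : ℕ} {Q : Matrix (Fin n) (Fin n) ℝ} (hQ : Q ∈ SO n)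
    {c : Fin n → ℝ} (hc : Q + Qᵀ = (2 : ℝ) • diagonal c) :
    ∃ A : Matrix (Fin n) (Fin n) ℝ, Aᵀ = -A ∧ hsSq A ≤ Real.pi ^ 2 * n ∧ NormedSpace.exp A = Q := by
  obtain ⟨T, hT⟩ : ∃ T, T = Q - diagonal c := ⟨_, rfl⟩
  have hQT : Q = diagonal c + T := by rw [hT]; abel
  have hQt : Qᵀ = diagonal c - T := by
    have : Qᵀ = (2 : ℝ) • diagonal c - Q := by rw [← hc]; abel
    rw [this, hT, two_smul]; abel
  have hTs : Tᵀ = -T := by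
    rw [hT, Matrix.transpose_sub, hQt, Matrix.diagonal_transpose, hT]; abel
  have h1 : (diagonal c + T) * (diagonal c - T) = 1 := by rw [← hQT, ← hQt, hQ.1]
  have h2 : (diagonal c - T) * (diagonal c + T) = 1 := by
    rw [← hQT, ← hQt, SO.transpose_mul hQ]
  rw [Matrix.add_mul, Matrix.mul_sub, Matrix.mul_sub] at h1
  rw [Matrix.sub_mul, Matrix.mul_add, Matrix.mul_add] at h2
  have hcomm : diagonal c * T = T * diagonal c := by
    ext i j
    have e1 := congrFun (congrFun h1 i) j
    have e2 := congrFun (congrFun h2 i) j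
    simp only [Matrix.add_apply, Matrix.sub_apply] at e1 e2
    linarith
  have hTT : T * T = diagonal fun i => c i ^ 2 - 1 := by
    have : diagonal (fun i => c i ^ 2 - 1) = diagonal c * diagonal c - 1 := by
      rw [Matrix.diagonal_mul_diagonal, ← Matrix.diagonal_one, Matrix.diagonal_sub]
      simp only [sq]
    rw [this, ← h1, hcomm]; abel
  have hent : ∀ i j, T i j ≠ 0 → c i = c j := fun i j hij => by
    have := congrFun (congrFun hcomm i) j
    rw [Matrix.diagonal_mul, Matrix.mul_diagonal, mul_comm] at this
    exact mul_left_cancel₀ hij this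
  have hTij : ∀ i j, T j i = -T i j := fun i j => congrFun (congrFun hTs i) j
  have hnorm : ∀ i, ∑ j, T i j ^ 2 = 1 - c i ^ 2 := fun i => by
    have := congrFun (congrFun hTT i) i
    rw [Matrix.mul_apply, Matrix.diagonal_apply_eq] at this
    have e : ∑ j, T i j * T j i = -∑ j, T i j ^ 2 := by
      rw [← Finset.sum_neg_distrib]
      exact Finset.sum_congr rfl fun j _ => by rw [hTij i j]; ring
    linarith
  have hcle : ∀ i, c i ^ 2 ≤ 1 := fun i => by
    have : 0 ≤ ∑ j, T i j ^ 2 := Finset.sum_nonneg fun j _ => sq_nonneg _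
    linarith [hnorm i]
  have hc0 : ∀ i, -1 ≤ c i := fun i => (abs_le.1 ((sq_le_one_iff_abs_le_one _).1 (hcle i))).1
  have hc1 : ∀ i, c i ≤ 1 := fun i => (abs_le.1 ((sq_le_one_iff_abs_le_one _).1 (hcle i))).2
  have hrow : ∀ i, c i ^ 2 = 1 → ∀ j, T i j = 0 := fun i hi j => by
    have h0 := hnorm i
    rw [hi, sub_self] at h0
    have := (Finset.sum_eq_zero_iff_of_nonneg fun j _ => sq_nonneg (T i j)).1 h0 j
      (Finset.mem_univ j)
    exact pow_eq_zero_iff two_ne_zero |>.1 this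
  have hev := SO.even_card_eq_neg_one hQ hc hc0 fun i hi j => by
    rw [hQT, Matrix.add_apply, hrow i (by rw [hi]; norm_num) j, Matrix.diagonal_apply, hi, add_zero]
  obtain ⟨J, hJt, hJJ, hJ0⟩ := exists_skew_mul_self_eq hev
  have hJT : J * T = 0 := by
    ext i j
    rw [Matrix.mul_apply]
    refine Finset.sum_eq_zero fun k _ => ?_
    by_cases hk : c k = -1
    · rw [hrow k (by rw [hk]; norm_num) j, mul_zero]
    · have := congrFun (congrFun hJt k) i
      rw [Matrix.transpose_apply, Matrix.neg_apply, hJ0 k hk i, neg_zero] at this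
      rw [this, zero_mul]
  have hTJ : T * J = 0 := by
    have := congrArg Matrix.transpose hJT
    rwa [Matrix.transpose_mul, hTs, hJt, neg_mul_neg, Matrix.transpose_zero] at this
  set φ : Fin n → ℝ := fun i => Real.arccos (c i) with hφ
  set g : Fin n → ℝ := fun i => φ i / Real.sin (φ i) with hg
  have hgT : diagonal g * T = T * diagonal g := by
    ext i j
    rw [Matrix.diagonal_mul, Matrix.mul_diagonal, mul_comm]
    by_cases h : T i j = 0
    · simp [h]
    · simp only [hg, hφ, hent i j h]
  have hAA : (diagonal g * T + Real.pi • J) * (diagonal g * T + Real.pi • J) =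
      -diagonal fun i => φ i ^ 2 := by
    have e1 : diagonal g * T * (diagonal g * T) =
        diagonal fun i => g i ^ 2 * (c i ^ 2 - 1) := by
      rw [Matrix.mul_assoc, ← Matrix.mul_assoc T, ← hgT, Matrix.mul_assoc, ← Matrix.mul_assoc,
        hTT, Matrix.diagonal_mul_diagonal, Matrix.diagonal_mul_diagonal]
      simp only [sq]
    have e2 : J * (diagonal g * T) = 0 := by rw [hgT, ← Matrix.mul_assoc, hJT, Matrix.zero_mul]
    rw [Matrix.add_mul, Matrix.mul_add, Matrix.mul_add, e1, Matrix.mul_smul, Matrix.mul_assoc _ T J,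
      hTJ, Matrix.smul_mul, e2, Matrix.smul_mul, Matrix.mul_smul, hJJ]
    ext i j
    rcases eq_or_ne i j with rfl | hij
    · have := sq_div_sin_arccos (hc0 i) (hc1 i)
      simp only [Matrix.mul_zero, smul_zero, add_zero, zero_add, Matrix.add_apply,
        Matrix.diagonal_apply_eq, Matrix.neg_apply, Matrix.smul_apply, smul_eq_mul, hg, hφ]
      linarith
    · simp [hij]
  have hAs : (diagonal g * T + Real.pi • J)ᵀ = -(diagonal g * T + Real.pi • J) := by
    rw [Matrix.transpose_add, Matrix.transpose_mul, hTs, Matrix.diagonal_transpose,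
      Matrix.transpose_smul, hJt, Matrix.neg_mul, ← hgT, smul_neg, neg_add]
  refine ⟨diagonal g * T + Real.pi • J, hAs, ?_, ?_⟩
  · rw [hsSq, hAs, Matrix.neg_mul, hAA, neg_neg, Matrix.trace_diagonal]
    calc ∑ i, φ i ^ 2 ≤ ∑ _i : Fin n, Real.pi ^ 2 := Finset.sum_le_sum fun i _ =>
          pow_le_pow_left₀ (Real.arccos_nonneg _) (Real.arccos_le_pi _) 2
      _ = Real.pi ^ 2 * n := by simp [mul_comm]
  · rw [exp_of_mul_self_eq_neg_diagonal hAA, hQT]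
    have hcos : (fun i => Real.cos (φ i)) = c := funext fun i => Real.cos_arccos (hc0 i) (hc1 i)
    rw [hcos]
    congr 1
    ext i j
    rw [Matrix.diagonal_mul, Matrix.add_apply, Matrix.diagonal_mul, Matrix.smul_apply, smul_eq_mul,
      mul_add]
    by_cases h1 : c i = -1
    · rw [hrow i (by rw [h1]; norm_num) j]
      simp [hφ, h1, Real.sinc_of_ne_zero Real.pi_ne_zero]
    rw [hJ0 i h1 j]
    by_cases h2 : c i = 1
    · rw [hrow i (by rw [h2]; norm_num) j]; simp
    · rw [← mul_assoc, sinc_mul_div_sin_arccos (lt_of_le_of_ne (hc0 i) (Ne.symm h1))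
        (lt_of_le_of_ne (hc1 i) h2)]
      simp

/-- Every rotation has a skew-symmetric logarithm of Hilbert–Schmidt norm at most `π√n`. -/
lemma SO.exists_log {n : ℕ} {Q : Matrix (Fin n) (Fin n) ℝ} (hQ : Q ∈ SO n) :
    ∃ A : Matrix (Fin n) (Fin n) ℝ, Aᵀ = -A ∧ hsSq A ≤ Real.pi ^ 2 * n ∧ NormedSpace.exp A = Q := by
  have hS : (Q + Qᵀ).IsHermitian := by
    rw [Matrix.IsHermitian, Matrix.conjTranspose_eq_transpose_of_trivial, Matrix.transpose_add,
      Matrix.transpose_transpose, add_comm]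
  obtain ⟨U, d, hUU, hspec⟩ : ∃ (U : Matrix (Fin n) (Fin n) ℝ) (d : Fin n → ℝ), U * Uᵀ = 1 ∧
      Q + Qᵀ = U * diagonal d * Uᵀ := by
    refine ⟨(hS.eigenvectorUnitary).1, hS.eigenvalues, ?_, ?_⟩
    · have := Unitary.mul_star_self_of_mem (hS.eigenvectorUnitary).2
      rwa [Matrix.star_eq_conjTranspose, Matrix.conjTranspose_eq_transpose_of_trivial] at this
    · have := hS.spectral_theorem
      rwa [Unitary.conjStarAlgAut_apply, Matrix.star_eq_conjTranspose,
        Matrix.conjTranspose_eq_transpose_of_trivial] at this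
  have hUU' : Uᵀ * U = 1 := mul_eq_one_comm.1 hUU
  have hdet : U.det * U.det = 1 := by
    have := congrArg Matrix.det hUU
    rwa [Matrix.det_mul, Matrix.det_transpose, Matrix.det_one] at this
  have hQ' : Uᵀ * Q * U ∈ SO n := by
    refine ⟨?_, ?_⟩
    · rw [Matrix.transpose_mul, Matrix.transpose_mul, Matrix.transpose_transpose]
      rw [show Uᵀ * Q * U * (Uᵀ * (Qᵀ * U)) = Uᵀ * (Q * (U * Uᵀ) * Qᵀ) * U by
        simp only [Matrix.mul_assoc], hUU, Matrix.mul_one, hQ.1, Matrix.mul_one, hUU']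
    · rw [Matrix.det_mul, Matrix.det_mul, hQ.2, Matrix.det_transpose, mul_one, hdet]
  have hd : Uᵀ * Q * U + (Uᵀ * Q * U)ᵀ = (2 : ℝ) • diagonal fun i => d i / 2 := by
    rw [Matrix.transpose_mul, Matrix.transpose_mul, Matrix.transpose_transpose,
      ← Matrix.mul_assoc, ← Matrix.add_mul, ← Matrix.mul_add, hspec,
      show Uᵀ * (U * diagonal d * Uᵀ) * U =
        Uᵀ * U * diagonal d * (Uᵀ * U) by simp only [Matrix.mul_assoc],
      hUU', Matrix.one_mul, Matrix.mul_one, ← Matrix.diagonal_smul]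
    congr 1
    ext i
    simp [mul_div_cancel₀]
  obtain ⟨A, hA, hAn, hAe⟩ := SO.exists_log_of_diagonal hQ' hd
  refine ⟨U * A * Uᵀ, ?_, ?_, ?_⟩
  · rw [Matrix.transpose_mul, Matrix.transpose_mul, Matrix.transpose_transpose, hA]
    simp [Matrix.mul_assoc]
  · convert hAn using 1
    rw [hsSq, hsSq, Matrix.transpose_mul, Matrix.transpose_mul, Matrix.transpose_transpose,
      show U * (Aᵀ * Uᵀ) * (U * A * Uᵀ) = U * (Aᵀ * (Uᵀ * U) * A * Uᵀ) by
        simp only [Matrix.mul_assoc], hUU', Matrix.mul_one, Matrix.trace_mul_comm,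
      Matrix.mul_assoc _ Uᵀ, hUU', Matrix.mul_one]
  · have hinv : U⁻¹ = Uᵀ := Matrix.inv_eq_right_inv hUU
    have hunit : IsUnit U := IsUnit.of_mul_eq_one _ hUU
    rw [← hinv, Matrix.exp_conj _ _ hunit, hAe, hinv,
      show U * (Uᵀ * Q * U) * Uᵀ = U * Uᵀ * Q * (U * Uᵀ) by simp only [Matrix.mul_assoc], hUU,
      Matrix.one_mul, Matrix.mul_one]

/-- A finite measure on a compact metrizable space lifts along continuous surjections from compact
Hausdorff spaces. -/
lemma exists_measure_map_eq {X Y : Type*} [TopologicalSpace X] [CompactSpace X] [T2Space X]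
    [MeasurableSpace X] [BorelSpace X] [TopologicalSpace Y] [CompactSpace Y]
    [TopologicalSpace.PseudoMetrizableSpace Y] [MeasurableSpace Y] [BorelSpace Y] {q : X → Y}
    (hq : Continuous q) (hs : Function.Surjective q) (ν : Measure Y) [IsFiniteMeasure ν] :
    ∃ l : Measure X, IsFiniteMeasure l ∧ l.map q = ν := by
  let L : C(Y, ℝ) →ₗ[ℝ] CompactlySupportedContinuousMap X ℝ :=
    { toFun := fun f => ⟨f.comp ⟨q, hq⟩, HasCompactSupport.of_compactSpace _⟩
      map_add' := fun _ _ => rfl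
      map_smul' := fun _ _ => rfl }
  have hLa : ∀ f x, L f x = f (q x) := fun _ _ => rfl
  have hL : Function.Injective L := fun f g hfg => by
    ext y
    obtain ⟨x, rfl⟩ := hs y
    rw [← hLa, hfg, hLa]
  have hint : ∀ f : C(Y, ℝ), Integrable f ν := fun f =>
    f.continuous.integrable_of_hasCompactSupport (HasCompactSupport.of_compactSpace _)
  let I : C(Y, ℝ) →ₗ[ℝ] ℝ :=
    { toFun := fun f => ∫ y, f y ∂ν
      map_add' := fun f g => integral_add (hint f) (hint g)
      map_smul' := fun r f => integral_const_mul r f }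
  let F : CompactlySupportedContinuousMap X ℝ →ₗ.[ℝ] ℝ :=
    ⟨LinearMap.range L, I ∘ₗ (LinearEquiv.ofInjective L hL).symm.toLinearMap⟩
  have hF : ∀ f (hf : L f ∈ F.domain), F ⟨L f, hf⟩ = ∫ y, f y ∂ν := fun f hf => by
    have : (LinearEquiv.ofInjective L hL).symm ⟨L f, hf⟩ = f := by
      rw [LinearEquiv.symm_apply_eq]; rfl
    change I ((LinearEquiv.ofInjective L hL).symm ⟨L f, hf⟩) = _
    rw [this]; rfl
  let S : PointedCone ℝ (CompactlySupportedContinuousMap X ℝ) :=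
    { carrier := {h | 0 ≤ h}
      add_mem' := fun ha hb x => add_nonneg (ha x) (hb x)
      zero_mem' := fun _ => le_refl (0 : ℝ)
      smul_mem' := fun r h hh x => mul_nonneg r.2 (hh x) }
  obtain ⟨g, hg, hg0⟩ := riesz_extension S F (by
      rintro ⟨_, f, rfl⟩ h0
      refine (hF f (LinearMap.mem_range_self _ _)).symm ▸ ?_
      refine integral_nonneg fun y => ?_
      obtain ⟨x, rfl⟩ := hs y
      exact h0 x) (fun h => by
      obtain ⟨B, hB⟩ := isCompact_univ.exists_bound_of_continuousOn h.continuous.continuousOn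
      refine ⟨⟨L (ContinuousMap.const Y B), LinearMap.mem_range_self _ _⟩, fun x => ?_⟩
      have : -B ≤ h x := (abs_le.1 (hB x (Set.mem_univ x))).1
      change 0 ≤ B + h x
      linarith)
  let Λ : CompactlySupportedContinuousMap X ℝ →ₚ[ℝ] ℝ := PositiveLinearMap.mk₀ g hg0
  refine ⟨RealRMK.rieszMeasure Λ, inferInstance, ?_⟩
  refine ext_of_forall_integral_eq_of_IsFiniteMeasure fun f => ?_
  rw [integral_map hq.aemeasurable f.continuous.aestronglyMeasurable]
  have h1 := RealRMK.integral_rieszMeasure Λ (L f.toContinuousMap)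
  have h2 : Λ (L f.toContinuousMap) = ∫ y, f y ∂ν := by
    change g (L f.toContinuousMap) = _
    exact (hg ⟨_, LinearMap.mem_range_self _ _⟩).trans
      (hF f.toContinuousMap (LinearMap.mem_range_self _ _))
  rw [← h2, ← h1]
  rfl

lemma exp_skew_mem {n : ℕ} {A : Matrix (Fin n) (Fin n) ℝ} (hA : Aᵀ = -A) :
    NormedSpace.exp A ∈ SO n := by
  have horth : ∀ B : Matrix (Fin n) (Fin n) ℝ, Bᵀ = -B →
      NormedSpace.exp B * (NormedSpace.exp B)ᵀ = 1 := fun B hB => by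
    rw [← Matrix.exp_transpose, hB, Matrix.exp_neg]
    exact Matrix.mul_nonsing_inv _ ((Matrix.isUnit_iff_isUnit_det _).1 (Matrix.isUnit_exp B))
  refine ⟨horth A hA, ?_⟩
  have h2 : NormedSpace.exp A =
      NormedSpace.exp ((1 / 2 : ℝ) • A) * NormedSpace.exp ((1 / 2 : ℝ) • A) := by
    rw [← Matrix.exp_add_of_commute _ _ (Commute.refl _), ← add_smul]
    norm_num
  have := congrArg Matrix.det (horth ((1 / 2 : ℝ) • A) (by rw [Matrix.transpose_smul, hA, smul_neg]))
  rwa [Matrix.det_mul, Matrix.det_transpose, Matrix.det_one, ← Matrix.det_mul, ← h2] at this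

lemma hasDerivAt_exp_smul_entry {n : ℕ} (A : Matrix (Fin n) (Fin n) ℝ) (u : ℝ) (k l : Fin n) :
    HasDerivAt (fun v : ℝ => NormedSpace.exp (v • A) k l)
      ((A * NormedSpace.exp (u • A)) k l) u := by
  let : NormedRing (Matrix (Fin n) (Fin n) ℝ) := Matrix.linftyOpNormedRing
  let : NormedAlgebra ℝ (Matrix (Fin n) (Fin n) ℝ) := Matrix.linftyOpNormedAlgebra
  have h := hasDerivAt_exp_smul_const' (𝕂 := ℝ) A u
  have hk := (LinearMap.toContinuousLinearMap
    (Matrix.entryLinearMap ℝ ℝ k l)).hasFDerivAt.comp_hasDerivAt u h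
  exact hk

lemma continuous_matrix_exp {n : ℕ} :
    Continuous (NormedSpace.exp : Matrix (Fin n) (Fin n) ℝ → Matrix (Fin n) (Fin n) ℝ) := by
  let : NormedRing (Matrix (Fin n) (Fin n) ℝ) := Matrix.linftyOpNormedRing
  let : NormedAlgebra ℚ (Matrix (Fin n) (Fin n) ℝ) := Matrix.linftyOpNormedAlgebra
  let : NormedAlgebra ℝ (Matrix (Fin n) (Fin n) ℝ) := Matrix.linftyOpNormedAlgebra
  have : CompleteSpace (Matrix (Fin n) (Fin n) ℝ) := FiniteDimensional.complete ℝ _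
  exact NormedSpace.exp_continuous

lemma isSOPath_exp {n : ℕ} {A x : Matrix (Fin n) (Fin n) ℝ} (hA : Aᵀ = -A) (hx : x ∈ SO n) :
    IsSOPath (fun u => NormedSpace.exp (u • A) * x) (fun _ => A) where
  mem u := SO.mul_mem (exp_skew_mem (by rw [Matrix.transpose_smul, hA, smul_neg])) hx
  skew _ := hA
  cont := continuous_const
  deriv u k l := by
    have h := hasDerivAt_matrix_mul (hasDerivAt_exp_smul_entry A u)
      (B := fun _ => x) (B' := 0) (fun k l => hasDerivAt_const u _) k l
    simpa [Matrix.mul_assoc] using h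

lemma isCompact_SO (n : ℕ) : IsCompact (SO n) := by
  have hcl : IsClosed (SO n) :=
    (isClosed_eq (continuous_id.mul continuous_id.matrix_transpose) continuous_const).inter
      (isClosed_eq continuous_id.matrix_det continuous_const)
  have hK : IsCompact (Set.pi Set.univ fun _ : Fin n => Set.pi Set.univ fun _ : Fin n =>
      Set.Icc (-1 : ℝ) 1) := isCompact_univ_pi fun _ => isCompact_univ_pi fun _ => isCompact_Icc
  refine hK.of_isClosed_subset hcl
    fun (a : Matrix (Fin n) (Fin n) ℝ) ha i _ j _ => ?_
  rw [Set.mem_Icc, ← abs_le, ← sq_le_one_iff_abs_le_one]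
  have h := congrFun (congrFun ha.1 i) i
  rw [Matrix.mul_apply, Matrix.one_apply_eq] at h
  rw [← h]
  simp only [Matrix.transpose_apply, ← sq]
  exact Finset.single_le_sum (f := fun j => a i j ^ 2) (fun j _ => sq_nonneg _) (Finset.mem_univ j)

lemma isCompact_skew_hsSq_le (n : ℕ) (r : ℝ) :
    IsCompact {A : Matrix (Fin n) (Fin n) ℝ | Aᵀ = -A ∧ hsSq A ≤ r} := by
  have hcl : IsClosed {A : Matrix (Fin n) (Fin n) ℝ | Aᵀ = -A ∧ hsSq A ≤ r} :=
    (isClosed_eq continuous_id.matrix_transpose continuous_neg).inter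
      (isClosed_le continuous_hsSq continuous_const)
  have hK : IsCompact (Set.pi Set.univ fun _ : Fin n => Set.pi Set.univ fun _ : Fin n =>
      Set.Icc (-√r) √r) := isCompact_univ_pi fun _ => isCompact_univ_pi fun _ => isCompact_Icc
  refine hK.of_isClosed_subset hcl
    fun (a : Matrix (Fin n) (Fin n) ℝ) ha i _ j _ => ?_
  rw [Set.mem_Icc, ← abs_le]
  refine Real.abs_le_sqrt (le_trans ?_ ha.2)
  rw [hsSq_eq_sum]
  exact (Finset.single_le_sum (f := fun j => a i j ^ 2) (fun j _ => sq_nonneg _)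
    (Finset.mem_univ j)).trans (Finset.single_le_sum (f := fun i => ∑ j, a i j ^ 2)
    (fun i _ => Finset.sum_nonneg fun j _ => sq_nonneg _) (Finset.mem_univ i))

lemma coe_specialOrthogonalGroup (n : ℕ) :
    (Matrix.specialOrthogonalGroup (Fin n) ℝ : Set (Matrix (Fin n) (Fin n) ℝ)) = SO n := by
  ext a
  rw [SetLike.mem_coe, Matrix.mem_specialOrthogonalGroup_iff, Matrix.mem_orthogonalGroup_iff]
  rfl

instance compactSpace_specialOrthogonalGroup (n : ℕ) :
    CompactSpace (Matrix.specialOrthogonalGroup (Fin n) ℝ) := by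
  refine isCompact_iff_compactSpace.1 (?_ : IsCompact
    (Matrix.specialOrthogonalGroup (Fin n) ℝ : Set (Matrix (Fin n) (Fin n) ℝ)))
  rw [coe_specialOrthogonalGroup]
  exact isCompact_SO n

instance isTopologicalGroup_specialOrthogonalGroup (n : ℕ) :
    IsTopologicalGroup (Matrix.specialOrthogonalGroup (Fin n) ℝ) where
  continuous_inv := (continuous_subtype_val.matrix_transpose).subtype_mk _

/-- The normalized Haar measure of a compact group is right invariant. -/
lemma map_mul_right_of_isProbabilityMeasure {G : Type*} [TopologicalSpace G] [Group G]
    [IsTopologicalGroup G] [CompactSpace G] [MeasurableSpace G] [BorelSpace G] (m : Measure G)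
    [m.IsHaarMeasure] [IsProbabilityMeasure m] (g : G) : m.map (· * g) = m := by
  have h := Measure.isMulInvariant_eq_smul_of_compactSpace (m.map (· * g)) m
  have hm : AEMeasurable (· * g) m := (measurable_mul_const g).aemeasurable
  have : IsProbabilityMeasure (m.map (· * g)) := Measure.isProbabilityMeasure_map hm
  have h1 := congrArg (fun κ : Measure G => κ Set.univ) h
  simp only [Measure.smul_apply, measure_univ, ENNReal.smul_def, smul_eq_mul, mul_one] at h1
  rw [h]
  ext s _
  rw [Measure.smul_apply, ENNReal.smul_def, ← h1, one_smul]

lemma exists_isHaarLike_SO (n : ℕ) : ∃ μ, IsHaarLike (SO n) μ := by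
  let G := Matrix.specialOrthogonalGroup (Fin n) ℝ
  let m : Measure G := Measure.haarMeasure ⊤
  have : IsProbabilityMeasure m := ⟨Measure.haarMeasure_self⟩
  have hv : Measurable (Subtype.val : G → Matrix (Fin n) (Fin n) ℝ) := measurable_subtype_coe
  refine ⟨m.map Subtype.val, Measure.isProbabilityMeasure_map hv.aemeasurable, ?_, ?_⟩
  · rw [Measure.map_apply hv (isCompact_SO n).isClosed.measurableSet.compl,
      ← coe_specialOrthogonalGroup]
    have he : (Subtype.val ⁻¹' (Matrix.specialOrthogonalGroup (Fin n) ℝ :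
        Set (Matrix (Fin n) (Fin n) ℝ))ᶜ : Set G) = ∅ :=
      Set.eq_empty_of_forall_notMem fun g hg => hg g.2
    rw [he, measure_empty]
  · intro a ha
    rw [← coe_specialOrthogonalGroup] at ha
    constructor
    · rw [Measure.map_map (measurable_const_mul a) hv]
      conv_rhs => rw [← map_mul_left_eq_self m (⟨a, ha⟩ : G)]
      rw [Measure.map_map hv (measurable_const_mul _)]
      rfl
    · rw [Measure.map_map (measurable_mul_const a) hv]
      conv_rhs => rw [← map_mul_right_of_isProbabilityMeasure m (⟨a, ha⟩ : G)]
      rw [Measure.map_map hv (measurable_mul_const _)]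
      rfl

lemma isHaarLike_haarLike_SO (n : ℕ) : IsHaarLike (SO n) (haarLike (SO n)) := by
  rw [haarLike, dif_pos (exists_isHaarLike_SO n)]
  exact (exists_isHaarLike_SO n).choose_spec

/-- A left invariant probability measure is stationary for the walk. -/
lemma IsHaarLike.bind_kacKernelRho {n : ℕ} (hn : 2 ≤ n) {H : Measure (Matrix (Fin n) (Fin n) ℝ)}
    (hH : IsHaarLike (SO n) H) {ρ : ℝ → ℝ} (hρ : angleMeasure ρ Set.univ = 1) :
    H.bind (kacKernelRho n ρ) = H := by
  have := hH.1
  refine Measure.ext_of_lintegral _ fun f hf => ?_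
  have hm : ∀ p : Fin n × Fin n, Measurable fun x =>
      ∫⁻ θ, f (kacRot p.1 p.2 θ * x) ∂angleMeasure ρ :=
    fun p => measurable_lintegral_kacRot _ _ _ hf
  rw [Measure.lintegral_bind (measurable_kacKernelRho ρ).aemeasurable hf.aemeasurable]
  simp_rw [lintegral_kacKernelRho ρ hf]
  rw [lintegral_const_mul _ (Finset.measurable_fun_sum _ fun p _ => hm p),
    lintegral_finsetSum _ fun p _ => hm p]
  have hs : ∀ p ∈ pairs n, ∫⁻ x, ∫⁻ θ, f (kacRot p.1 p.2 θ * x) ∂angleMeasure ρ ∂H =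
      ∫⁻ x, f x ∂H := by
    intro p hp
    rw [lintegral_lintegral_swap]
    · have hinv : ∀ θ, ∫⁻ x, f (kacRot p.1 p.2 θ * x) ∂H = ∫⁻ x, f x ∂H := fun θ => by
        have h := (hH.2.2 _ (kacRot_mem (Finset.mem_filter.1 hp).2.ne θ)).1
        conv_rhs => rw [← h]
        rw [lintegral_map hf (measurable_const_mul _)]
      simp [hinv, hρ]
    · exact (hf.comp (((measurable_kacRot _ _).comp measurable_snd).mul
        measurable_fst)).aemeasurable
  rw [Finset.sum_congr rfl hs, Finset.sum_const, card_pairs, nsmul_eq_mul, ← mul_assoc,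
    ENNReal.inv_mul_cancel _ (ENNReal.natCast_ne_top _), one_mul]
  exact_mod_cast (Nat.choose_pos hn).ne'

/-- Any law on `SO(n)` is joined to Haar measure by random one-parameter paths. -/
lemma IsHaarLike.pathCoupled {n : ℕ} {H μ : Measure (Matrix (Fin n) (Fin n) ℝ)}
    (hH : IsHaarLike (SO n) H) [IsProbabilityMeasure μ] (hμ : μ (SO n)ᶜ = 0) :
    PathCoupled μ H (ENNReal.ofReal (Real.pi ^ 2 * n)) := by
  have := hH.1
  let K := {A : Matrix (Fin n) (Fin n) ℝ | Aᵀ = -A ∧ hsSq A ≤ Real.pi ^ 2 * n}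
  have : CompactSpace K := isCompact_iff_compactSpace.1 (isCompact_skew_hsSq_le n _)
  have : CompactSpace (SO n) := isCompact_iff_compactSpace.1 (isCompact_SO n)
  have hSO : MeasurableSet (SO n) := (isCompact_SO n).isClosed.measurableSet
  have hmap : ∀ ν : Measure (Matrix (Fin n) (Fin n) ℝ), ν (SO n)ᶜ = 0 →
      (ν.comap (Subtype.val : SO n → _)).map Subtype.val = ν := fun ν hν => by
    rw [map_comap_subtype_coe hSO, Measure.restrict_eq_self_of_ae_mem]
    exact hν
  have hfin : ∀ ν : Measure (Matrix (Fin n) (Fin n) ℝ), IsProbabilityMeasure ν → ν (SO n)ᶜ = 0 →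
      IsProbabilityMeasure (ν.comap (Subtype.val : SO n → _)) := fun ν _ hν => ⟨by
    have h := congrArg (fun κ : Measure _ => κ Set.univ) (hmap ν hν)
    simpa [Measure.map_apply measurable_subtype_coe MeasurableSet.univ] using h⟩
  have := hfin H hH.1 hH.2.1
  have := hfin μ inferInstance hμ
  let q : K → SO n := fun A => ⟨NormedSpace.exp A.1, exp_skew_mem A.2.1⟩
  have hq : Continuous q := (continuous_matrix_exp.comp continuous_subtype_val).subtype_mk _
  obtain ⟨l, _, hl⟩ := exists_measure_map_eq hq (fun Q => by
    obtain ⟨A, h1, h2, h3⟩ := SO.exists_log Q.2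
    exact ⟨⟨A, h1, h2⟩, Subtype.ext h3⟩) (H.comap (Subtype.val : SO n → _))
  have hlH : l.map (fun A => NormedSpace.exp A.1) = H := by
    rw [← hmap H hH.2.1, ← hl, Measure.map_map measurable_subtype_coe hq.measurable]
    rfl
  have hexp : ∀ u : ℝ, Measurable fun A : K => NormedSpace.exp (u • A.1) := fun u =>
    (continuous_matrix_exp.comp (continuous_subtype_val.const_smul u)).measurable
  have hexp1 : Measurable fun A : K => NormedSpace.exp A.1 := by simpa using hexp 1
  have : IsProbabilityMeasure l := ⟨by
    have h := congrArg (fun κ : Measure _ => κ Set.univ) hlH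
    simpa [Measure.map_apply hexp1 MeasurableSet.univ] using h⟩
  have hγ : ∀ u : ℝ, Measurable fun ω : SO n × K => NormedSpace.exp (u • ω.2.1) * ω.1.1 :=
    fun u => ((hexp u).comp measurable_snd).mul (measurable_subtype_coe.comp measurable_fst)
  refine ⟨SO n × K, inferInstance, (μ.comap Subtype.val).prod l,
    fun ω u => NormedSpace.exp (u • ω.2.1) * ω.1.1, fun ω _ => ω.2.1, inferInstance,
    fun ω => isSOPath_exp ω.2.2.1 ω.1.2, hγ,
    fun _ => measurable_subtype_coe.comp measurable_snd, ?_, ?_, ?_⟩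
  · simp only [zero_smul, NormedSpace.exp_zero, one_mul]
    have h : (fun ω : SO n × K => ω.1.1) = Subtype.val ∘ Prod.fst := rfl
    rw [h, ← Measure.map_map measurable_subtype_coe measurable_fst, Measure.map_fst_prod,
      measure_univ, one_smul, hmap μ hμ]
  · refine Measure.ext_of_lintegral _ fun f hf => ?_
    rw [lintegral_map hf (hγ 1),
      lintegral_prod (fun ω : SO n × K => f (NormedSpace.exp ((1 : ℝ) • ω.2.1) * ω.1.1))
        (hf.comp (hγ 1)).aemeasurable]
    simp only [one_smul]
    have hinv : ∀ x : SO n, ∫⁻ A : K, f (NormedSpace.exp A.1 * x.1) ∂l = ∫⁻ y, f y ∂H := by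
      intro x
      conv_rhs => rw [← (hH.2.2 x.1 x.2).2]
      rw [lintegral_map hf (measurable_mul_const _), ← hlH,
        lintegral_map (f := fun y => f (y * x.1)) (hf.comp (measurable_mul_const _)) hexp1]
    simp [hinv]
  · refine (lintegral_mono (g := fun _ => ENNReal.ofReal (Real.pi ^ 2 * n)) fun ω => ?_).trans
      (by simp)
    refine ENNReal.ofReal_le_ofReal ?_
    simpa [energy] using ω.2.2.2

lemma pathCoupled_kernelIterate {n : ℕ} (hn : 2 ≤ n) {ρ : ℝ → ℝ}
    (hρcont : ContinuousOn ρ (Set.Icc 0 (2 * Real.pi)))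
    (hρint : ∫ θ in Set.Icc 0 (2 * Real.pi), ρ θ = 1)
    {c : ℝ} (hc : 0 ≤ c) (hρ : ∀ θ ∈ Set.Icc 0 (2 * Real.pi), c ≤ ρ θ)
    {H μ : Measure (Matrix (Fin n) (Fin n) ℝ)} (hH : IsHaarLike (SO n) H)
    [IsProbabilityMeasure μ] (hμ : μ (SO n)ᶜ = 0) (t : ℕ) :
    PathCoupled (kernelIterate (kacKernelRho n ρ) t μ) H
      (ENNReal.ofReal (1 - 2 * Real.pi * c / n.choose 2) ^ t *
        ENNReal.ofReal (Real.pi ^ 2 * n)) := by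
  induction t with
  | zero => simpa [kernelIterate] using hH.pathCoupled hμ
  | succ t ih =>
    have h := ih.step hn hρcont hρint hc hρ
    rwa [hH.bind_kacKernelRho hn (angleMeasure_univ hρcont (fun θ hθ => hc.trans (hρ θ hθ)) hρint),
      ← mul_assoc, ← pow_succ'] at h

/-- The number of steps after which the contraction brings the energy down to `ε ^ 2`. -/
lemma contraction_pow_mul_le {n : ℕ} (hn : 2 ≤ n) {c ε : ℝ} (hc : 0 < c)
    (hc1 : 2 * Real.pi * c ≤ 1) (hε : 0 < ε) {t : ℕ}
    (ht : (n : ℝ) ^ 2 / (2 * Real.pi * c) * Real.log (Real.pi * Real.sqrt n / ε) ≤ t) :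
    (1 - 2 * Real.pi * c / n.choose 2) ^ t * (Real.pi ^ 2 * n) ≤ ε ^ 2 := by
  have hπ := Real.pi_pos
  have hn0 : (0 : ℝ) < n := by positivity
  have hN : (1 : ℝ) ≤ n.choose 2 := by exact_mod_cast Nat.choose_pos hn
  have hNn : (n.choose 2 : ℝ) ≤ (n : ℝ) ^ 2 / 2 := by
    rw [Nat.cast_choose_two]; nlinarith
  set q := 2 * Real.pi * c with hq
  have hq0 : 0 < q := by positivity
  set x := Real.pi * Real.sqrt n / ε with hx
  have hx0 : 0 < x := by positivity
  have hxx : Real.pi ^ 2 * n = x ^ 2 * ε ^ 2 := by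
    rw [hx, div_pow, mul_pow, Real.sq_sqrt hn0.le]; field_simp
  have hκ0 : 0 ≤ 1 - q / n.choose 2 := by
    rw [sub_nonneg, div_le_one (by linarith)]; linarith
  have hlog : 2 * Real.log x ≤ t * (q / n.choose 2) := by
    rw [div_mul_eq_mul_div, div_le_iff₀ hq0] at ht
    rw [mul_div_assoc', le_div_iff₀ (by linarith)]
    have htq : 0 ≤ (t : ℝ) * q := by positivity
    rcases le_total (Real.log x) 0 with h | h
    · nlinarith
    · nlinarith
  have hκ : (1 - q / n.choose 2) ^ t ≤ Real.exp (-(2 * Real.log x)) := by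
    calc (1 - q / n.choose 2) ^ t ≤ Real.exp (-(q / n.choose 2)) ^ t :=
          pow_le_pow_left₀ hκ0 (Real.one_sub_le_exp_neg _) t
      _ = Real.exp (-(t * (q / n.choose 2))) := by rw [← Real.exp_nat_mul]; ring_nf
      _ ≤ _ := Real.exp_le_exp.2 (neg_le_neg hlog)
  have hex : Real.exp (-(2 * Real.log x)) = (x ^ 2)⁻¹ := by
    rw [Real.exp_neg, two_mul, Real.exp_add, Real.exp_log hx0, sq]
  rw [hxx]
  calc (1 - q / n.choose 2) ^ t * (x ^ 2 * ε ^ 2) ≤ (x ^ 2)⁻¹ * (x ^ 2 * ε ^ 2) := by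
        rw [← hex]; gcongr
    _ = ε ^ 2 := by field_simp

/-- **Theorem 4.** If the angle density `ρ` is bounded below by `ρ_min > 0`, then for every
`n ≥ 2` and `ε > 0` the walk `K^{(ρ)}` satisfies
`τ_{D,2}(ε) ≤ ⌈(n²/(2π ρ_min)) ln(π√n/ε)⌉`: for every probability measure `μ` on `SO(n)`
and every integer `t ≥ (n²/(2π ρ_min)) ln(π√n/ε)`, the time-`t` distribution is within `ε`
of the Haar measure in `L²` transportation cost for the intrinsic metric `D`. -/
theorem kac_walk_nonuniform_mixing_time (n : ℕ) (hn : 2 ≤ n)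
    (ρ : ℝ → ℝ) (hρcont : ContinuousOn ρ (Set.Icc 0 (2 * Real.pi)))
    (hρint : ∫ θ in Set.Icc 0 (2 * Real.pi), ρ θ = 1)
    (ρmin : ℝ) (hρleast : IsLeast (ρ '' Set.Icc 0 (2 * Real.pi)) ρmin) (hρ0 : 0 < ρmin)
    (ε : ℝ) (hε : 0 < ε)
    (μ : Measure (Matrix (Fin n) (Fin n) ℝ)) (hμprob : IsProbabilityMeasure μ)
    (hμSO : μ (SO n)ᶜ = 0) (t : ℕ)
    (ht : (n : ℝ) ^ 2 / (2 * Real.pi * ρmin) * Real.log (Real.pi * Real.sqrt n / ε)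
      ≤ (t : ℝ)) :
    wassersteinE (DSO n) 2 (kernelIterate (kacKernelRho n ρ) t μ) (haarLike (SO n)) ≤
      ENNReal.ofReal ε := by
  have hρ : ∀ θ ∈ Set.Icc 0 (2 * Real.pi), ρmin ≤ ρ θ := fun θ hθ =>
    hρleast.2 (Set.mem_image_of_mem ρ hθ)
  have hq := two_pi_mul_le_one hρcont hρ0.le hρ hρint
  have hκ : 0 ≤ 1 - 2 * Real.pi * ρmin / n.choose 2 := by
    have hN : (1 : ℝ) ≤ n.choose 2 := by exact_mod_cast Nat.choose_pos hn
    rw [sub_nonneg, div_le_one (by linarith)]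
    linarith
  refine (pathCoupled_kernelIterate hn hρcont hρint hρ0.le hρ (isHaarLike_haarLike_SO n) hμSO
    t).wassersteinE_le.trans ?_
  rw [← ENNReal.ofReal_pow hκ, ← ENNReal.ofReal_mul (pow_nonneg hκ t)]
  refine (ENNReal.rpow_le_rpow (ENNReal.ofReal_le_ofReal
    (contraction_pow_mul_le hn hρ0 hq hε ht)) (by norm_num)).trans_eq ?_
  rw [ENNReal.ofReal_rpow_of_nonneg (sq_nonneg ε) (by norm_num), ← Real.sqrt_eq_rpow,
    Real.sqrt_sq hε.le]

end
end
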